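/- arXiv:2205.04091 — 8 statements merged into one kernel-verified Lean document; each statement's English description precedes it below -/
import Mathlib

section
/- Fix h > 0. For all real x, ξ: W_{h,ℝ}(ψ_0,ψ_0)(x,ξ) = 1; W_{h,ℝ}(ψ_0,ψ_1)(x,ξ) = √(2/h)·(x + iξ); and W_{h,ℝ}(ψ_1,ψ_1)(x,ξ) = −1 + (2/h)·(x² + ξ²). -/
open Real MeasureTheory

/-- Hermite functions: `psi h j x = ((−1)^j/√(j!))·(h/2)^{j/2}·e^{x²/h}·(d/dx)^j(e^{−x²/h})(x)`. -/
noncomputable def psi (h : ℝ) (j : ℕ) (x : ℝ) : ℝ :=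
  ((-1 : ℝ) ^ j / Real.sqrt (Nat.factorial j)) * (h / 2) ^ ((j : ℝ) / 2) *
    Real.exp (x ^ 2 / h) * iteratedDeriv j (fun t => Real.exp (-t ^ 2 / h)) x

/-- The one-dimensional Gaussian Wigner function `W_{h,ℝ}(f,g)`. -/
noncomputable def wigner1 (h : ℝ) (f g : ℝ → ℂ) (z ζ : ℝ) : ℂ :=
  (Real.exp (ζ ^ 2 / h) : ℂ) *
    ∫ t : ℝ, Complex.exp (-2 * Complex.I * (ζ : ℂ) * (t : ℂ) / (h : ℂ)) * f (z + t) *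
      (starRingEnd ℂ) (g (z - t)) * (Real.exp (-t ^ 2 / h) : ℂ) *
        (((π * h) ^ (-(1 : ℝ) / 2) : ℝ) : ℂ)

noncomputable def gG (h ξ : ℝ) (t : ℝ) : ℂ :=
  Complex.exp (-((1 / h : ℝ) : ℂ) * ((t : ℂ) + (ξ : ℂ) * Complex.I) ^ 2)

lemma gG_hasDeriv (h ξ t : ℝ) :
    HasDerivAt (gG h ξ) (-(2 / h : ℂ) * ((t : ℂ) + ξ * Complex.I) * gG h ξ t) t := by
  have h1 : HasDerivAt (fun t : ℝ => (t : ℂ)) 1 t := Complex.ofRealCLM.hasDerivAt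
  have h2 := (((h1.add_const ((ξ : ℂ) * Complex.I)).pow 2).const_mul (-((1 / h : ℝ) : ℂ))).cexp
  unfold gG
  refine h2.congr_deriv ?_
  simp only [Pi.pow_apply]
  push_cast
  ring

lemma gG_continuous (h ξ : ℝ) : Continuous (gG h ξ) := by
  unfold gG; fun_prop

lemma gG_norm (h ξ t : ℝ) :
    ‖gG h ξ t‖ = Real.exp (ξ ^ 2 / h) * Real.exp (-(1 / h) * t ^ 2) := by
  unfold gG
  rw [Complex.norm_exp, ← Real.exp_add]
  congr 1
  simp [pow_two]
  ring

lemma gG_int (h ξ : ℝ) (hh : 0 < h) (k : ℕ) :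
    Integrable (fun t : ℝ => (t : ℂ) ^ k * gG h ξ t) := by
  have h1 := (integrable_rpow_mul_exp_neg_mul_sq (b := 1 / h) (by positivity) (s := (k : ℝ))
    (by have : (0 : ℝ) ≤ k := by positivity
        linarith)).const_mul (Real.exp (ξ ^ 2 / h))
  refine h1.mono ?_ ?_
  · have := gG_continuous h ξ
    exact Continuous.aestronglyMeasurable (by fun_prop)
  · refine Filter.Eventually.of_forall fun t => le_of_eq ?_
    rw [norm_mul, gG_norm, norm_mul, norm_mul, Real.rpow_natCast]
    simp
    ring

lemma gG_E0 (h ξ : ℝ) (hh : 0 < h) :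
    ∫ t : ℝ, gG h ξ t = (((π * h) ^ ((1 : ℝ) / 2) : ℝ) : ℂ) := by
  unfold gG
  rw [GaussianFourier.integral_cexp_neg_mul_sq_add_real_mul_I (by rw [Complex.ofReal_re]; positivity),
    Complex.ofReal_cpow (by positivity)]
  push_cast
  congr 1
  field_simp

lemma gG_E1 (h ξ : ℝ) (hh : 0 < h) :
    ∫ t : ℝ, (t : ℂ) * gG h ξ t = -(ξ * Complex.I) * ∫ t : ℝ, gG h ξ t := by
  have i0 : Integrable (gG h ξ) := by simpa using gG_int h ξ hh 0
  have i1 : Integrable (fun t : ℝ => (t : ℂ) * gG h ξ t) := by simpa using gG_int h ξ hh 1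
  have e : (fun t : ℝ => -(2 / h : ℂ) * ((t : ℂ) + ξ * Complex.I) * gG h ξ t)
      = fun t : ℝ => (-(2 / h : ℂ)) * ((t : ℂ) * gG h ξ t + (ξ * Complex.I) * gG h ξ t) := by
    funext t; ring
  have hz := integral_eq_zero_of_hasDerivAt_of_integrable (gG_hasDeriv h ξ)
    (by rw [e]; exact (i1.add (i0.const_mul _)).const_mul _) i0
  rw [e, integral_const_mul, integral_add i1 (i0.const_mul _), integral_const_mul] at hz
  have hc : (h : ℂ) ≠ 0 := by exact_mod_cast hh.ne'
  have := (mul_eq_zero.mp hz).resolve_left (by simp [hc])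
  linear_combination this

lemma gG_E2 (h ξ : ℝ) (hh : 0 < h) :
    ∫ t : ℝ, (t : ℂ) ^ 2 * gG h ξ t = (h / 2 - ξ ^ 2 : ℂ) * ∫ t : ℝ, gG h ξ t := by
  have i0 : Integrable (gG h ξ) := by simpa using gG_int h ξ hh 0
  have i1 : Integrable (fun t : ℝ => (t : ℂ) * gG h ξ t) := by simpa using gG_int h ξ hh 1
  have i2 := gG_int h ξ hh 2
  have hd : ∀ t : ℝ, HasDerivAt (fun t : ℝ => (t : ℂ) * gG h ξ t)
      (gG h ξ t + ((-(2 / h : ℂ)) * ((t : ℂ) ^ 2 * gG h ξ t)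
        + (-(2 / h : ℂ) * (ξ * Complex.I)) * ((t : ℂ) * gG h ξ t))) t := by
    intro t
    have h1 : HasDerivAt (fun t : ℝ => (t : ℂ)) 1 t := Complex.ofRealCLM.hasDerivAt
    refine (h1.mul (gG_hasDeriv h ξ t)).congr_deriv ?_
    ring
  have j : Integrable (fun t : ℝ => (-(2 / h : ℂ)) * ((t : ℂ) ^ 2 * gG h ξ t)
        + (-(2 / h : ℂ) * (ξ * Complex.I)) * ((t : ℂ) * gG h ξ t)) := (i2.const_mul (-(2 / h : ℂ))).add (i1.const_mul (-(2 / h : ℂ) * (ξ * Complex.I)))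
  have hz := integral_eq_zero_of_hasDerivAt_of_integrable hd (i0.add j) i1
  rw [integral_add i0 j, integral_add (i2.const_mul _) (i1.const_mul _), integral_const_mul,
    integral_const_mul, gG_E1 h ξ hh] at hz
  have hc : (h : ℂ) ≠ 0 := by exact_mod_cast hh.ne'
  field_simp at hz
  linear_combination (-1/2 : ℂ) * hz + ξ ^ 2 * (∫ t : ℝ, gG h ξ t) * Complex.I_sq

lemma wigner1_poly (h : ℝ) (hh : 0 < h) (f g : ℝ → ℂ) (x ξ : ℝ) (a b c : ℂ)
    (hfg : ∀ t : ℝ, f (x + t) * (starRingEnd ℂ) (g (x - t)) = a + b * t + c * (t : ℂ) ^ 2) :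
    wigner1 h f g x ξ = a - b * (ξ * Complex.I) + c * (h / 2 - ξ ^ 2) := by
  have hc : (h : ℂ) ≠ 0 := by exact_mod_cast hh.ne'
  have i0 : Integrable (gG h ξ) := by simpa using gG_int h ξ hh 0
  have i1 : Integrable (fun t : ℝ => (t : ℂ) * gG h ξ t) := by simpa using gG_int h ξ hh 1
  have i2 := gG_int h ξ hh 2
  set K : ℂ := (((π * h) ^ (-(1 : ℝ) / 2) : ℝ) : ℂ) with hK
  set E : ℂ := ((Real.exp (ξ ^ 2 / h) : ℝ) : ℂ) with hE
  have hE0 : E ≠ 0 := by rw [hE]; exact_mod_cast (Real.exp_pos _).ne'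
  have hKE : K * ∫ t : ℝ, gG h ξ t = 1 := by
    rw [gG_E0 h ξ hh, hK, ← Complex.ofReal_mul, ← Real.rpow_add (by positivity)]
    norm_num
  have e : ∀ t : ℝ, Complex.exp (-2 * Complex.I * (ξ : ℂ) * (t : ℂ) / (h : ℂ)) * f (x + t) *
      (starRingEnd ℂ) (g (x - t)) * (Real.exp (-t ^ 2 / h) : ℂ) * K
      = (E⁻¹ * K) * (a * gG h ξ t + (b * ((t : ℂ) * gG h ξ t) + c * ((t : ℂ) ^ 2 * gG h ξ t))) := by
    intro t
    have : Complex.exp (-2 * Complex.I * (ξ : ℂ) * (t : ℂ) / (h : ℂ)) * (Real.exp (-t ^ 2 / h) : ℂ)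
        = E⁻¹ * gG h ξ t := by
      rw [hE, gG]
      push_cast
      rw [← Complex.exp_neg, ← Complex.exp_add, ← Complex.exp_add]
      congr 1
      field_simp
      linear_combination (ξ : ℂ) ^ 2 * Complex.I_sq
    linear_combination (Complex.exp (-2 * Complex.I * (ξ : ℂ) * (t : ℂ) / (h : ℂ)) *
      (Real.exp (-t ^ 2 / h) : ℂ) * K) * hfg t + K * (a + b * t + c * (t : ℂ) ^ 2) * this
  have j : Integrable (fun t : ℝ => b * ((t : ℂ) * gG h ξ t) + c * ((t : ℂ) ^ 2 * gG h ξ t)) :=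
    (i1.const_mul _).add (i2.const_mul _)
  unfold wigner1
  rw [← hE, ← hK]
  simp_rw [e]
  rw [integral_const_mul, integral_add (i0.const_mul _) j,
    integral_add (i1.const_mul _) (i2.const_mul _), integral_const_mul, integral_const_mul,
    integral_const_mul, gG_E1 h ξ hh, gG_E2 h ξ hh]
  have hEE : E * E⁻¹ = 1 := mul_inv_cancel₀ hE0
  linear_combination (K * (∫ t : ℝ, gG h ξ t) * hEE + hKE) *
    (a - b * (ξ * Complex.I) + c * (h / 2 - ξ ^ 2))

lemma psi_zero (h x : ℝ) : psi h 0 x = 1 := by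
  simp [psi, ← Real.exp_add, neg_div]

lemma psi_one (h : ℝ) (hh : 0 < h) (x : ℝ) : psi h 1 x = Real.sqrt (2 / h) * x := by
  have hd : HasDerivAt (fun t : ℝ => Real.exp (-t ^ 2 / h))
      (Real.exp (-x ^ 2 / h) * (-(2 * x) / h)) x := by
    refine (((((hasDerivAt_id x).pow 2).neg).div_const h).exp).congr_deriv ?_
    simp
  have h1 : Real.exp (x ^ 2 / h) * Real.exp (-x ^ 2 / h) = 1 := by
    rw [← Real.exp_add, neg_div]; simp
  have h2 : (h / 2) ^ ((1 : ℝ) / 2) = Real.sqrt (2 / h) * (h / 2) := by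
    rw [← Real.sqrt_eq_rpow]
    have : (2 / h) = (h / 2)⁻¹ := by simp
    rw [this, Real.sqrt_inv]
    have h3 : 0 < Real.sqrt (h / 2) := Real.sqrt_pos.mpr (by positivity)
    have h4 := Real.mul_self_sqrt (show 0 ≤ h / 2 by positivity)
    rw [eq_inv_mul_iff_mul_eq₀ h3.ne', h4]
  rw [psi, iteratedDeriv_one, hd.deriv]
  simp only [Nat.cast_one, h2, Nat.factorial_one, Real.sqrt_one, pow_one]
  have h5 : h * h⁻¹ = 1 := mul_inv_cancel₀ hh.ne'
  linear_combination (Real.sqrt (2 / h) * x * h * h⁻¹) * h1 + Real.sqrt (2 / h) * x * h5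

/-- The Wigner functions of the first Hermite functions. -/
theorem wigner_first_hermite (h : ℝ) (hh : 0 < h) (x ξ : ℝ) :
    wigner1 h (fun t => (psi h 0 t : ℂ)) (fun t => (psi h 0 t : ℂ)) x ξ = 1 ∧
    wigner1 h (fun t => (psi h 0 t : ℂ)) (fun t => (psi h 1 t : ℂ)) x ξ =
      (Real.sqrt (2 / h) : ℂ) * ((x : ℂ) + Complex.I * (ξ : ℂ)) ∧
    wigner1 h (fun t => (psi h 1 t : ℂ)) (fun t => (psi h 1 t : ℂ)) x ξ =
      -1 + ((2 / h : ℝ) : ℂ) * ((x : ℂ) ^ 2 + (ξ : ℂ) ^ 2) := by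
  have hc : (h : ℂ) ≠ 0 := by exact_mod_cast hh.ne'
  have hs : (Real.sqrt (2 / h) : ℂ) * (Real.sqrt (2 / h) : ℂ) = ((2 / h : ℝ) : ℂ) := by
    rw [← Complex.ofReal_mul, Real.mul_self_sqrt (by positivity)]
  refine ⟨?_, ?_, ?_⟩
  · rw [wigner1_poly h hh _ _ x ξ 1 0 0 (by intro t; simp [psi_zero])]
    ring
  · rw [wigner1_poly h hh _ _ x ξ (Real.sqrt (2 / h) * x) (-Real.sqrt (2 / h)) 0]
    · ring
    · intro t
      simp only [psi_zero, psi_one h hh, Complex.conj_ofReal]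
      push_cast
      ring
  · rw [wigner1_poly h hh _ _ x ξ (((2 / h : ℝ) : ℂ) * x ^ 2) 0 (-((2 / h : ℝ) : ℂ))]
    · push_cast
      field_simp
      ring
    · intro t
      simp only [psi_one h hh, Complex.conj_ofReal]
      rw [← hs]
      push_cast
      ring
end

section
/- Fix h > 0. For every complex number v and every real number x, the series Σ_{j=0}^∞ ψ_j(x)·v^j/√(j!) converges absolutely and its sum equals e^{x·v·√(2/h) − v²/2}; moreover, for each fixed v ∈ ℂ the series converges in L²(ℝ, μ_{ℝ,h/2}). -/
open Real MeasureTheory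

/-- The Gaussian measure `μ_{ℝ,s}` of variance `s` on `ℝ`. -/
noncomputable def gaussMeasure (s : ℝ) : Measure ℝ :=
  volume.withDensity fun x =>
    ENNReal.ofReal ((2 * π * s) ^ (-(1 : ℝ) / 2) * Real.exp (-x ^ 2 / (2 * s)))


def hermP {R : Type*} [CommRing R] (a b : R) : ℕ → R
  | 0 => 1
  | 1 => a
  | (n + 2) => a * hermP a b (n + 1) + b * ((n : R) + 1) * hermP a b n

lemma hermP_ofReal (a b : ℝ) (n : ℕ) :
    ((hermP a b n : ℝ) : ℂ) = hermP (a : ℂ) (b : ℂ) n := by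
  induction n using Nat.strong_induction_on with
  | _ n ih =>
    match n with
    | 0 => simp [hermP]
    | 1 => simp [hermP]
    | (n + 2) =>
      have h1 := ih (n + 1) (by omega)
      have h0 := ih n (by omega)
      simp only [hermP]
      push_cast
      rw [h1, h0]

lemma hermP_norm_le (a b : ℂ) (n : ℕ) :
    ‖hermP a b n‖ ≤ hermP ‖a‖ ‖b‖ n := by
  induction n using Nat.strong_induction_on with
  | _ n ih =>
    match n with
    | 0 => simp [hermP]
    | 1 => simp [hermP]
    | (n + 2) =>
      have h1 := ih (n + 1) (by omega)
      have h0 := ih n (by omega)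
      simp only [hermP]
      refine (norm_add_le _ _).trans ?_
      have e : ‖((n : ℂ) + 1)‖ = (n : ℝ) + 1 := by
        have : ((n : ℂ) + 1) = ((n + 1 : ℕ) : ℂ) := by push_cast; rfl
        rw [this, Complex.norm_natCast]; push_cast; rfl
      rw [norm_mul, norm_mul, norm_mul, e]
      gcongr

lemma iter_rec {𝕜 : Type*} [RCLike 𝕜] (F : 𝕜 → 𝕜) (a b : 𝕜) (hF : ContDiff 𝕜 ⊤ F)
    (hd : ∀ v, HasDerivAt F ((a + b * v) * F v) v) (n : ℕ) :
    ∀ v, iteratedDeriv (n + 2) F v =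
      (a + b * v) * iteratedDeriv (n + 1) F v + b * ((n : 𝕜) + 1) * iteratedDeriv n F v := by
  have hdif : ∀ m v, HasDerivAt (iteratedDeriv m F) (iteratedDeriv (m + 1) F v) v := by
    intro m v
    rw [iteratedDeriv_succ]
    exact ((hF.differentiable_iteratedDeriv m (by simp)) v).hasDerivAt
  have hlin : ∀ v : 𝕜, HasDerivAt (fun v => a + b * v) b v := by
    intro v
    simpa using ((hasDerivAt_id v).const_mul b).const_add a
  have h1 : iteratedDeriv 1 F = fun v => (a + b * v) * F v := by
    rw [iteratedDeriv_one]
    funext v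
    exact (hd v).deriv
  induction n with
  | zero =>
    intro v
    rw [iteratedDeriv_succ, zero_add, h1]
    have := ((hlin v).mul (hd v)).deriv
    simp only [Pi.mul_def] at this
    rw [this]
    simp only [iteratedDeriv_zero]
    push_cast
    ring
  | succ n ih =>
    intro v
    have := (((hlin v).mul (hdif (n + 1) v)).add ((hdif n v).const_mul (b * ((n : 𝕜) + 1)))).deriv
    simp only [Pi.mul_def, Pi.add_def] at this
    rw [← funext ih, ← iteratedDeriv_succ] at this
    rw [this]
    push_cast
    ring

lemma hasSum_hermP (a b v : ℂ) :
    HasSum (fun n : ℕ => hermP a b n * v ^ n / (n.factorial : ℂ))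
      (Complex.exp (a * v + b * v ^ 2 / 2)) := by
  set F : ℂ → ℂ := fun v => Complex.exp (a * v + b * v ^ 2 / 2) with hFdef
  have hF : ContDiff ℂ ⊤ F := by rw [hFdef]; fun_prop
  have hd : ∀ v, HasDerivAt F ((a + b * v) * F v) v := by
    intro v
    have h1 : HasDerivAt (fun v : ℂ => a * v + b * v ^ 2 / 2) (a + b * v) v := by
      have := ((hasDerivAt_id v).const_mul a).add
        ((((hasDerivAt_id v).pow 2).const_mul b).div_const 2)
      refine this.congr_deriv ?_
      simp; ring
    have := h1.cexp
    rwa [mul_comm] at this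
  have key : ∀ n, iteratedDeriv n F 0 = hermP a b n := by
    intro n
    induction n using Nat.strong_induction_on with
    | _ n ih =>
      match n with
      | 0 => simp [hermP, hFdef]
      | 1 => rw [iteratedDeriv_one, (hd 0).deriv]; simp [hermP, hFdef]
      | (n + 2) =>
        rw [iter_rec F a b hF hd, ih (n + 1) (by omega), ih n (by omega)]
        simp [hermP]
  have := Complex.hasSum_taylorSeries_of_entire (hF.differentiable (by simp)) 0 v
  have e : (fun n : ℕ => hermP a b n * v ^ n / (n.factorial : ℂ)) =
      fun n : ℕ => (n.factorial : ℂ)⁻¹ • (v - 0) ^ n • iteratedDeriv n F 0 := by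
    funext n
    rw [key]
    simp
    ring
  rw [e]
  exact this

lemma hasSum_hermP_real (a b v : ℝ) :
    HasSum (fun n : ℕ => hermP a b n * v ^ n / (n.factorial : ℝ))
      (Real.exp (a * v + b * v ^ 2 / 2)) := by
  rw [← Complex.hasSum_ofReal]
  have := hasSum_hermP a b v
  convert this using 1
  · funext n
    push_cast
    rw [hermP_ofReal]
  · push_cast
    rfl

lemma term_norm_le (a b v : ℂ) (n : ℕ) :
    ‖hermP a b n * v ^ n / (n.factorial : ℂ)‖ ≤
      hermP ‖a‖ ‖b‖ n * ‖v‖ ^ n / (n.factorial : ℝ) := by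
  rw [norm_div, norm_mul, norm_pow, Complex.norm_natCast]
  gcongr
  exact hermP_norm_le a b n

lemma psi_recur (h : ℝ) (hh : 0 < h) (x : ℝ) (n : ℕ) :
    (-1 : ℝ) ^ n * (h / 2) ^ ((n : ℝ) / 2) * Real.exp (x ^ 2 / h) *
      iteratedDeriv n (fun t => Real.exp (-t ^ 2 / h)) x = hermP (√(2 / h) * x) (-1) n := by
  set F : ℝ → ℝ := fun t => Real.exp (-t ^ 2 / h) with hFdef
  have hF : ContDiff ℝ ⊤ F := by rw [hFdef]; fun_prop
  have hd : ∀ v, HasDerivAt F ((0 + (-(2 / h)) * v) * F v) v := by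
    intro v
    have h1 : HasDerivAt (fun v : ℝ => -v ^ 2 / h) (0 + (-(2 / h)) * v) v := by
      have := ((hasDerivAt_id v).pow 2).neg.div_const h
      refine this.congr_deriv ?_
      simp; ring
    have := h1.exp
    rwa [mul_comm] at this
  set c := √(2 / h) with hc
  have hcpos : 0 < c := Real.sqrt_pos.mpr (by positivity)
  have hc2 : c ^ 2 = 2 / h := Real.sq_sqrt (by positivity)
  have hpow : ∀ n : ℕ, (h / 2) ^ ((n : ℝ) / 2) = (c⁻¹) ^ n := by
    intro n
    have : c⁻¹ = (h / 2) ^ ((1 : ℝ) / 2) := by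
      rw [hc, ← Real.sqrt_inv, inv_div, Real.sqrt_eq_rpow]
    rw [this, ← Real.rpow_natCast, ← Real.rpow_mul (by positivity)]
    congr 1
    ring
  have hE : Real.exp (x ^ 2 / h) * F x = 1 := by
    rw [hFdef, ← Real.exp_add, neg_div, add_neg_cancel, Real.exp_zero]
  rw [hpow]
  induction n using Nat.strong_induction_on with
  | _ n ih =>
    match n with
    | 0 => simpa [hermP] using hE
    | 1 =>
      rw [iteratedDeriv_one, (hd x).deriv]
      simp only [hermP, ← hc2]
      have : c⁻¹ * c = 1 := inv_mul_cancel₀ hcpos.ne'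
      linear_combination (c ^ 2 * x * c⁻¹) * hE + c * x * this
    | (n + 2) =>
      have h1 := ih (n + 1) (by omega)
      have h0 := ih n (by omega)
      rw [iter_rec F _ _ hF hd]
      simp only [hermP]
      rw [← h1, ← h0, ← hc2]
      have q : c⁻¹ * c = 1 := inv_mul_cancel₀ hcpos.ne'
      linear_combination (-(-1) ^ n * c⁻¹ ^ n * Real.exp (x ^ 2 / h) *
        (x * iteratedDeriv (n + 1) F x * c * c⁻¹ +
          ((n : ℝ) + 1) * iteratedDeriv n F x * (c * c⁻¹ + 1))) * q

lemma psi_term (h : ℝ) (hh : 0 < h) (v : ℂ) (x : ℝ) (j : ℕ) :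
    (psi h j x : ℂ) * v ^ j / (Real.sqrt (Nat.factorial j) : ℂ) =
      hermP ((√(2 / h) * x : ℝ) : ℂ) (-1) j * v ^ j / (j.factorial : ℂ) := by
  have e : psi h j x = hermP (√(2 / h) * x) (-1) j / Real.sqrt (Nat.factorial j) := by
    rw [← psi_recur h hh x j, psi]; ring
  have hs : (Real.sqrt (Nat.factorial j) : ℂ) * (Real.sqrt (Nat.factorial j) : ℂ) =
      (j.factorial : ℂ) := by
    rw [← Complex.ofReal_mul, Real.mul_self_sqrt (by positivity)]
    simp
  have := hermP_ofReal (√(2 / h) * x) (-1) j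
  rw [Complex.ofReal_neg, Complex.ofReal_one] at this
  rw [e, ← this, Complex.ofReal_div, ← hs]
  ring

lemma gauss_eq (h : ℝ) (hh : 0 < h) :
    gaussMeasure (h / 2) = ProbabilityTheory.gaussianReal 0 (h / 2).toNNReal := by
  have hne : (h / 2).toNNReal ≠ 0 := by
    rw [ne_eq, Real.toNNReal_eq_zero]; linarith
  rw [ProbabilityTheory.gaussianReal_of_var_ne_zero _ hne, gaussMeasure]
  congr 1
  funext x
  rw [ProbabilityTheory.gaussianPDF, ProbabilityTheory.gaussianPDFReal,
    Real.coe_toNNReal _ (by positivity : 0 ≤ h / 2), sub_zero, neg_div,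
    Real.rpow_neg (by positivity), ← Real.sqrt_eq_rpow]

/-- The Bargman kernel series `Σ_j ψ_j(x) v^j/√(j!)` converges absolutely to
`e^{x·v·√(2/h) − v²/2}`, and, for fixed `v`, in `L²(ℝ, μ_{ℝ,h/2})`. -/
theorem bargman_kernel_series (h : ℝ) (hh : 0 < h) :
    (∀ (v : ℂ) (x : ℝ),
      Summable (fun j : ℕ =>
        ‖(psi h j x : ℂ) * v ^ j / (Real.sqrt (Nat.factorial j) : ℂ)‖) ∧
      ∑' j : ℕ, (psi h j x : ℂ) * v ^ j / (Real.sqrt (Nat.factorial j) : ℂ) =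
        Complex.exp ((x : ℂ) * v * (Real.sqrt (2 / h) : ℂ) - v ^ 2 / 2)) ∧
    (∀ v : ℂ, Filter.Tendsto (fun n : ℕ =>
        ∫ x : ℝ, ‖(∑ j ∈ Finset.range n,
            (psi h j x : ℂ) * v ^ j / (Real.sqrt (Nat.factorial j) : ℂ)) -
          Complex.exp ((x : ℂ) * v * (Real.sqrt (2 / h) : ℂ) - v ^ 2 / 2)‖ ^ 2
          ∂ gaussMeasure (h / 2))
      Filter.atTop (nhds 0)) := by
  have hsum : ∀ (v : ℂ) (x : ℝ), HasSum (fun j : ℕ =>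
      (psi h j x : ℂ) * v ^ j / (Real.sqrt (Nat.factorial j) : ℂ))
      (Complex.exp ((x : ℂ) * v * (Real.sqrt (2 / h) : ℂ) - v ^ 2 / 2)) := by
    intro v x
    simp only [psi_term h hh]
    convert hasSum_hermP ((√(2 / h) * x : ℝ) : ℂ) (-1) v using 2
    push_cast
    ring
  have hdom : ∀ (v : ℂ) (x : ℝ) (j : ℕ),
      ‖(psi h j x : ℂ) * v ^ j / (Real.sqrt (Nat.factorial j) : ℂ)‖ ≤
        hermP (√(2 / h) * |x|) 1 j * ‖v‖ ^ j / (j.factorial : ℝ) := by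
    intro v x j
    rw [psi_term h hh]
    have := term_norm_le ((√(2 / h) * x : ℝ) : ℂ) (-1) v j
    rwa [Complex.norm_real, norm_neg, norm_one, norm_mul, Real.norm_eq_abs, Real.norm_eq_abs,
      abs_of_nonneg (Real.sqrt_nonneg _)] at this
  have hB := fun (v : ℂ) (x : ℝ) => hasSum_hermP_real (√(2 / h) * |x|) 1 ‖v‖
  have habs : ∀ (v : ℂ) (x : ℝ), Summable (fun j : ℕ =>
      ‖(psi h j x : ℂ) * v ^ j / (Real.sqrt (Nat.factorial j) : ℂ)‖) := fun v x =>
    Summable.of_nonneg_of_le (fun _ => norm_nonneg _) (hdom v x) (hB v x).summable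
  refine ⟨fun v x => ⟨habs v x, (hsum v x).tsum_eq⟩, fun v => ?_⟩
  have hcont : ∀ j, Continuous (fun x : ℝ =>
      (psi h j x : ℂ) * v ^ j / (Real.sqrt (Nat.factorial j) : ℂ)) := by
    intro j
    have hps : Continuous (psi h j) := by
      unfold psi
      have : Continuous (iteratedDeriv j (fun t => Real.exp (-t ^ 2 / h))) := by
        have hF : ContDiff ℝ ⊤ (fun t => Real.exp (-t ^ 2 / h)) := by fun_prop
        exact hF.continuous_iteratedDeriv j (by simp)
      fun_prop
    fun_prop
  have hlim := tendsto_integral_of_dominated_convergence (μ := gaussMeasure (h / 2))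
    (F := fun (n : ℕ) (x : ℝ) => ‖(∑ j ∈ Finset.range n,
            (psi h j x : ℂ) * v ^ j / (Real.sqrt (Nat.factorial j) : ℂ)) -
          Complex.exp ((x : ℂ) * v * (Real.sqrt (2 / h) : ℂ) - v ^ 2 / 2)‖ ^ 2)
    (f := fun _ => 0)
    (fun x => (4 * Real.exp (‖v‖ ^ 2)) * Real.exp ((2 * √(2 / h) * ‖v‖) * |x|))
    ?_ ?_ ?_ ?_
  · simpa using hlim
  · intro n
    apply Continuous.aestronglyMeasurable
    fun_prop
  · apply Integrable.const_mul
    rw [gauss_eq h hh]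
    exact ProbabilityTheory.integrable_exp_mul_abs
      (ProbabilityTheory.integrable_exp_mul_gaussianReal _)
      (ProbabilityTheory.integrable_exp_mul_gaussianReal _)
  · intro n
    refine Filter.Eventually.of_forall fun x => ?_
    have h1 : ‖∑ j ∈ Finset.range n,
        (psi h j x : ℂ) * v ^ j / (Real.sqrt (Nat.factorial j) : ℂ)‖ ≤
        Real.exp (√(2 / h) * |x| * ‖v‖ + 1 * ‖v‖ ^ 2 / 2) := by
      refine (norm_sum_le _ _).trans ?_
      refine ((habs v x).sum_le_tsum _ (fun _ _ => norm_nonneg _)).trans ?_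
      rw [← (hB v x).tsum_eq]
      exact (habs v x).tsum_le_tsum (hdom v x) (hB v x).summable
    have h2 : ‖Complex.exp ((x : ℂ) * v * (Real.sqrt (2 / h) : ℂ) - v ^ 2 / 2)‖ ≤
        Real.exp (√(2 / h) * |x| * ‖v‖ + 1 * ‖v‖ ^ 2 / 2) := by
      rw [← (hsum v x).tsum_eq]
      exact tsum_of_norm_bounded (hB v x) (hdom v x)
    rw [norm_pow, norm_norm]
    have h3 := (norm_sub_le _ _).trans (add_le_add h1 h2)
    refine (pow_le_pow_left₀ (norm_nonneg _) h3 2).trans (le_of_eq ?_)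
    rw [mul_assoc 4, ← Real.exp_add, ← two_mul, mul_pow, ← Real.exp_nat_mul]
    norm_num
    ring
  · refine Filter.Eventually.of_forall fun x => ?_
    have h1 := ((hsum v x).tendsto_sum_nat.sub_const
      (Complex.exp ((x : ℂ) * v * (Real.sqrt (2 / h) : ℂ) - v ^ 2 / 2))).norm.pow 2
    simpa using h1
end

section
/- Fix h > 0. For all complex numbers u, v and all real numbers x, ξ: W_{h,ℝ}(K_u, K_{conj(v)})(x,ξ) = exp(−uv + √(2/h)·x·(u+v) + i·√(2/h)·ξ·(v−u)), where K_w(x) = e^{x·w·√(2/h) − w²/2} denotes the Bargman kernel with parameter w ∈ ℂ. -/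
open Real MeasureTheory

/-- The Bargman kernel `K_w(x) = e^{x·w·√(2/h) − w²/2}`. -/
noncomputable def bargman (h : ℝ) (w : ℂ) (x : ℝ) : ℂ :=
  Complex.exp ((x : ℂ) * w * (Real.sqrt (2 / h) : ℂ) - w ^ 2 / 2)

/-- The Wigner function of two Bargman kernels. -/
theorem wigner_bargman (h : ℝ) (hh : 0 < h) (u v : ℂ) (x ξ : ℝ) :
    wigner1 h (bargman h u) (bargman h ((starRingEnd ℂ) v)) x ξ =
      Complex.exp (-(u * v) + (Real.sqrt (2 / h) : ℂ) * (x : ℂ) * (u + v) +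
        Complex.I * (Real.sqrt (2 / h) : ℂ) * (ξ : ℂ) * (v - u)) := by
  have hc : (h : ℂ) ≠ 0 := by exact_mod_cast hh.ne'
  obtain ⟨s, hs⟩ : ∃ s : ℝ, s = Real.sqrt (2 / h) := ⟨_, rfl⟩
  have hs2 : (s : ℂ) ^ 2 = 2 / h := by
    rw [hs]
    exact_mod_cast Real.sq_sqrt (by positivity)
  have key : ∀ t : ℝ, Complex.exp (-2 * Complex.I * (ξ : ℂ) * (t : ℂ) / (h : ℂ)) *
      bargman h u (x + t) *
      (starRingEnd ℂ) (bargman h ((starRingEnd ℂ) v) (x - t)) * (Real.exp (-t ^ 2 / h) : ℂ) *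
        (((π * h) ^ (-(1 : ℝ) / 2) : ℝ) : ℂ) =
      Complex.exp ((-(1 / h : ℂ)) * (t : ℂ) ^ 2 + (-2 * Complex.I * ξ / h + s * (u - v)) * t +
        (s * x * (u + v) - (u ^ 2 + v ^ 2) / 2)) * (((π * h) ^ (-(1 : ℝ) / 2) : ℝ) : ℂ) := by
    intro t
    unfold bargman
    rw [← hs, ← Complex.exp_conj, Complex.ofReal_exp, ← Complex.exp_add, ← Complex.exp_add,
      ← Complex.exp_add]
    simp only [map_sub, map_mul, map_div₀, map_pow, Complex.conj_conj, Complex.conj_ofReal,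
      map_ofNat]
    congr 2
    push_cast
    ring
  have hb : (-(1 / h : ℂ)).re < 0 := by
    have : (-(1 / h : ℂ)) = ((-(1 / h) : ℝ) : ℂ) := by push_cast; rfl
    rw [this, Complex.ofReal_re]
    have : 0 < 1 / h := by positivity
    linarith
  have hpi : ((π : ℂ) / -(-(1 / h : ℂ))) ^ (1 / 2 : ℂ) * (((π * h) ^ (-(1 : ℝ) / 2) : ℝ) : ℂ)
      = 1 := by
    have hp : 0 < π * h := by positivity
    have e1 : ((π : ℂ) / -(-(1 / h : ℂ))) = ((π * h : ℝ) : ℂ) := by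
      push_cast; field_simp
    have e2 : (1 / 2 : ℂ) = ((1 / 2 : ℝ) : ℂ) := by push_cast; rfl
    rw [e1, e2, ← Complex.ofReal_cpow hp.le, ← Complex.ofReal_mul, ← Real.rpow_add hp]
    norm_num
  unfold wigner1
  simp_rw [key]
  rw [integral_mul_const, integral_cexp_quadratic hb, mul_right_comm, hpi, one_mul,
    Complex.ofReal_exp, ← Complex.exp_add, ← hs]
  congr 1
  have e3 : (-2 * Complex.I * ξ / h + s * (u - v)) ^ 2 / (4 * (-(1 / h : ℂ))) =
      -(h / 4) * (4 * Complex.I ^ 2 * ξ ^ 2 / h ^ 2 - 4 * Complex.I * ξ / h * s * (u - v)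
        + s ^ 2 * (u - v) ^ 2) := by
    field_simp
    ring
  rw [e3, hs2, Complex.I_sq]
  push_cast
  field_simp
  ring
end

section
/- Fix h > 0. For all integers j, k ≥ 0 and all real x, ξ: if j ≤ k then W_{h,ℝ}(ψ_j,ψ_k)(x,ξ) = √(j!/k!)·(x+iξ)^{k−j}·(−1)^j·(2/h)^{(k−j)/2}·L_j^{(k−j)}((2/h)(x²+ξ²)), and if j ≥ k then W_{h,ℝ}(ψ_j,ψ_k)(x,ξ) = √(k!/j!)·(x−iξ)^{j−k}·(−1)^k·(2/h)^{(j−k)/2}·L_k^{(j−k)}((2/h)(x²+ξ²)). -/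
open Real MeasureTheory

/-- Generalized Laguerre polynomial
`L_k^{(α)}(x) = Σ_{m=0}^{k} ((k+α)!/((k−m)!(α+m)!))·(−x)^m/m!`. -/
noncomputable def laguerre (k α : ℕ) (x : ℝ) : ℝ :=
  ∑ m ∈ Finset.range (k + 1),
    ((Nat.factorial (k + α) : ℝ) /
      ((Nat.factorial (k - m) : ℝ) * (Nat.factorial (α + m) : ℝ))) *
      (-x) ^ m / (Nat.factorial m : ℝ)

noncomputable section WignerAux

open Polynomial

/-- Hermite polynomials with parameter `a = 2 / h`. -/
def Hp (a : ℝ) : ℕ → Polynomial ℝ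
  | 0 => 1
  | n + 1 => C a * X * Hp a n - derivative (Hp a n)

lemma Hp_deriv (a : ℝ) (n : ℕ) :
    derivative (Hp a (n + 1)) = C (a * (n + 1)) * Hp a n := by
  induction n with
  | zero => simp [Hp]
  | succ n ih =>
    rw [Hp, derivative_sub, ih, derivative_mul, ih]
    simp only [derivative_mul, derivative_C, derivative_X]
    have hs : Hp a (n + 1) = C a * X * Hp a n - derivative (Hp a n) := rfl
    simp only [map_mul, map_add, map_natCast, map_one, Nat.cast_add, Nat.cast_one]
    linear_combination (-(C a) * ((n : Polynomial ℝ) + 1)) * hs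

lemma iter_eq (h : ℝ) (n : ℕ) (x : ℝ) :
    iteratedDeriv n (fun t => Real.exp (-t ^ 2 / h)) x
      = (-1) ^ n * (Hp (2 / h) n).eval x * Real.exp (-x ^ 2 / h) := by
  induction n generalizing x with
  | zero => simp [Hp]
  | succ n ih =>
    rw [iteratedDeriv_succ, funext ih]
    have h1 : HasDerivAt (fun t : ℝ => Real.exp (-t ^ 2 / h))
        (Real.exp (-x ^ 2 / h) * (-(2 * x) / h)) x := by
      have := (((hasDerivAt_pow 2 x).neg).div_const h).exp
      simpa using this
    have h2 := (((Hp (2 / h) n).hasDerivAt x).const_mul ((-1 : ℝ) ^ n)).mul h1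
    have h3 := h2.deriv
    simp only [Pi.mul_def] at h3
    rw [h3, Hp]
    simp only [eval_sub, eval_mul, eval_C, eval_X]
    ring

/-- The Gaussian weight. -/
def Gw (h ζ t : ℝ) : ℂ :=
  Complex.exp (-(1 / h : ℂ) * (t : ℂ) ^ 2 + (-2 * Complex.I * ζ / h) * (t : ℂ) + 0)

lemma Gw_norm (h ζ t : ℝ) : ‖Gw h ζ t‖ = Real.exp (-(1 / h) * t ^ 2) := by
  rw [Gw, Complex.norm_exp]
  congr 1
  have : (-(1 / h : ℂ) * (t : ℂ) ^ 2 + (-2 * Complex.I * ζ / h) * (t : ℂ) + 0)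
      = ((-(1 / h) * t ^ 2 : ℝ) : ℂ) + ((-2 * ζ / h * t : ℝ) : ℂ) * Complex.I := by
    push_cast; ring
  rw [this, Complex.add_re, Complex.ofReal_re, Complex.re_ofReal_mul]
  simp

lemma Gw_cont (h ζ : ℝ) : Continuous (Gw h ζ) := by
  unfold Gw
  fun_prop

lemma int_poly (h : ℝ) (hh : 0 < h) (ζ : ℝ) (p : Polynomial ℂ) :
    Integrable (fun t : ℝ => p.eval (t : ℂ) * Gw h ζ t) := by
  induction p using Polynomial.induction_on' with
  | add p q hp hq => 
    simp only [eval_add, add_mul]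
    exact hp.add hq
  | monomial n c =>
    have hb : 0 < 1 / h := by positivity
    have h0 := integrable_rpow_mul_exp_neg_mul_sq hb (s := n)
      (lt_of_lt_of_le (by norm_num) (Nat.cast_nonneg n))
    refine (h0.norm.const_mul ‖c‖).mono ?_ (Filter.Eventually.of_forall fun t => ?_)
    · have := Gw_cont h ζ
      exact Continuous.aestronglyMeasurable (by fun_prop)
    · simp [Gw_norm, mul_assoc]

/-- The Gaussian functional. -/
def Ef (h ζ : ℝ) (p : Polynomial ℂ) : ℂ := ∫ t : ℝ, p.eval (t : ℂ) * Gw h ζ t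

lemma Ef_add (h : ℝ) (hh : 0 < h) (ζ : ℝ) (p q : Polynomial ℂ) :
    Ef h ζ (p + q) = Ef h ζ p + Ef h ζ q := by
  simp only [Ef, eval_add, add_mul]
  exact integral_add (int_poly h hh ζ p) (int_poly h hh ζ q)

lemma Ef_C (h : ℝ) (ζ : ℝ) (c : ℂ) (p : Polynomial ℂ) :
    Ef h ζ (C c * p) = c * Ef h ζ p := by
  simp only [Ef, eval_mul, eval_C, mul_assoc]
  exact integral_const_mul _ _

lemma Ef_deriv (h : ℝ) (hh : 0 < h) (ζ : ℝ) (p : Polynomial ℂ) :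
    Ef h ζ (derivative p) = (2 / h : ℂ) * Ef h ζ (X * p) +
      (2 / h : ℂ) * (Complex.I * ζ) * Ef h ζ p := by
  have key : Ef h ζ (derivative p + C (-(2 / h : ℂ)) * (X * p)
      + C (-((2 / h : ℂ) * (Complex.I * ζ))) * p) = 0 := by
    refine integral_eq_zero_of_hasDerivAt_of_integrable
      (f := fun t : ℝ => p.eval (t : ℂ) * Gw h ζ t) ?_ (int_poly h hh ζ _) (int_poly h hh ζ _)
    intro t
    have h1 := (p.hasDerivAt (t : ℂ)).comp_ofReal
    have h2 : HasDerivAt (fun y : ℂ => -(1 / h : ℂ) * y ^ 2 + (-2 * Complex.I * ζ / h) * y + 0)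
        (-(1 / h : ℂ) * (2 * t) + (-2 * Complex.I * ζ / h)) (t : ℂ) := by
      have := ((((hasDerivAt_pow 2 (t : ℂ)).const_mul (-(1 / h : ℂ))).add
        ((hasDerivAt_id (t : ℂ)).const_mul (-2 * Complex.I * ζ / h : ℂ))).add_const 0)
      simpa using this
    have h3 := h1.mul h2.cexp.comp_ofReal
    refine h3.congr_deriv ?_
    simp only [eval_add, eval_mul, eval_C, eval_X, Gw]
    ring
  rw [Ef_add h hh, Ef_add h hh, Ef_C, Ef_C] at key
  linear_combination key

lemma Ef_one (h : ℝ) (hh : 0 < h) (ζ : ℝ) :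
    Ef h ζ 1 = ((π * h) ^ ((1 : ℝ) / 2) : ℝ) * (Real.exp (-ζ ^ 2 / h) : ℂ) := by
  simp only [Ef, eval_one, one_mul, Gw]
  have hc : (h : ℂ) ≠ 0 := by exact_mod_cast hh.ne'
  have hb : (-(1 / h : ℂ)).re < 0 := by
    have : (-(1 / h : ℂ)) = ((-(1 / h) : ℝ) : ℂ) := by push_cast; ring
    rw [this, Complex.ofReal_re]
    have : 0 < 1 / h := by positivity
    linarith
  rw [integral_cexp_quadratic hb]
  congr 1
  · rw [Complex.ofReal_cpow (by positivity)]
    congr 1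
    · push_cast; field_simp
    · push_cast; rfl
  · rw [Complex.ofReal_exp]
    congr 1
    push_cast
    field_simp
    ring_nf
    simp

/-- `H_n(z + t)` as a complex polynomial in `t`. -/
def Pp (h z : ℝ) (n : ℕ) : Polynomial ℂ :=
  ((Hp (2 / h) n).map (algebraMap ℝ ℂ)).comp (C (z : ℂ) + X)

/-- `H_n(z - t)` as a complex polynomial in `t`. -/
def Qp (h z : ℝ) (n : ℕ) : Polynomial ℂ :=
  ((Hp (2 / h) n).map (algebraMap ℝ ℂ)).comp (C (z : ℂ) - X)

lemma Pp_succ (h z : ℝ) (n : ℕ) :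
    Pp h z (n + 1) = C (2 / h : ℂ) * (C (z : ℂ) + X) * Pp h z n - derivative (Pp h z n) := by
  simp [Pp, Hp, derivative_comp, derivative_map]

lemma Qp_succ (h z : ℝ) (n : ℕ) :
    Qp h z (n + 1) = C (2 / h : ℂ) * (C (z : ℂ) - X) * Qp h z n + derivative (Qp h z n) := by
  simp [Qp, Hp, derivative_comp, derivative_map, sub_eq_add_neg]

lemma Qp_deriv (h z : ℝ) (n : ℕ) :
    derivative (Qp h z n) = - (C (2 / h * n : ℂ) * Qp h z (n - 1)) := by
  cases n with
  | zero => simp [Qp, Hp]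
  | succ n =>
    rw [Qp, derivative_comp, derivative_map, Hp_deriv]
    simp [Qp]

/-- The unnormalized matrix elements. -/
def Am (h z ζ : ℝ) (j k : ℕ) : ℂ := Ef h ζ (Pp h z j * Qp h z k)

lemma Am_zero (h : ℝ) (hh : 0 < h) (z ζ : ℝ) (k : ℕ) :
    Am h z ζ 0 k = ((2 / h : ℂ) * (z + Complex.I * ζ)) ^ k * Ef h ζ 1 := by
  induction k with
  | zero => simp [Am, Pp, Qp, Hp]
  | succ k ih =>
    have e : Pp h z 0 = 1 := by simp [Pp, Hp]
    simp only [Am, e, one_mul] at ih ⊢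
    have e2 : Qp h z (k + 1) = C (2 / h * z : ℂ) * Qp h z k + C (-(2 / h) : ℂ) * (X * Qp h z k)
        + derivative (Qp h z k) := by
      rw [Qp_succ, C_mul, C_neg]; ring
    rw [e2, Ef_add h hh, Ef_add h hh, Ef_C, Ef_C, Ef_deriv h hh, ih]
    ring

lemma Am_succ (h : ℝ) (hh : 0 < h) (z ζ : ℝ) (j k : ℕ) :
    Am h z ζ (j + 1) k =
      (2 / h : ℂ) * ((z - Complex.I * ζ) * Am h z ζ j k - k * Am h z ζ j (k - 1)) := by
  have e : Pp h z (j + 1) * Qp h z k = C (2 / h * z : ℂ) * (Pp h z j * Qp h z k)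
      + C (2 / h : ℂ) * (X * (Pp h z j * Qp h z k))
      + C (-1 : ℂ) * derivative (Pp h z j * Qp h z k)
      + C (-(2 / h * k) : ℂ) * (Pp h z j * Qp h z (k - 1)) := by
    rw [derivative_mul, Qp_deriv, Pp_succ, C_mul, C_neg, C_neg, C_1]; ring
  simp only [Am]
  rw [e, Ef_add h hh, Ef_add h hh, Ef_add h hh, Ef_C, Ef_C, Ef_C, Ef_C, Ef_deriv h hh]
  ring

lemma Am_closed (h : ℝ) (hh : 0 < h) (z ζ : ℝ) (j k : ℕ) :
    Am h z ζ j k = (2 / h : ℂ) ^ j * (∑ m ∈ Finset.range (j + 1),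
      (j.choose m : ℂ) * (z - Complex.I * ζ) ^ (j - m) * (-1) ^ m * (k.descFactorial m : ℂ) *
        ((2 / h : ℂ) * (z + Complex.I * ζ)) ^ (k - m)) * Ef h ζ 1 := by
  induction j generalizing k with
  | zero => simp [Am_zero h hh]
  | succ j ih =>
    rw [Am_succ h hh, ih, ih]
    generalize (2 / h : ℂ) * (z + Complex.I * ζ) = u
    generalize (z - Complex.I * ζ : ℂ) = v
    have key : (∑ m ∈ Finset.range (j + 1 + 1),
      ((j + 1).choose m : ℂ) * v ^ (j + 1 - m) * (-1) ^ m * (k.descFactorial m : ℂ) *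
        u ^ (k - m)) = v * (∑ m ∈ Finset.range (j + 1),
      (j.choose m : ℂ) * v ^ (j - m) * (-1) ^ m * (k.descFactorial m : ℂ) * u ^ (k - m))
      - k * (∑ m ∈ Finset.range (j + 1),
      (j.choose m : ℂ) * v ^ (j - m) * (-1) ^ m * ((k - 1).descFactorial m : ℂ) *
        u ^ (k - 1 - m)) := by
      have s1 : v * (∑ m ∈ Finset.range (j + 1),
        (j.choose m : ℂ) * v ^ (j - m) * (-1) ^ m * (k.descFactorial m : ℂ) * u ^ (k - m))
        = ∑ m ∈ Finset.range (j + 1 + 1),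
        (j.choose m : ℂ) * v ^ (j + 1 - m) * (-1) ^ m * (k.descFactorial m : ℂ) * u ^ (k - m) := by
        rw [Finset.sum_range_succ _ (j + 1), Finset.mul_sum]
        simp only [Nat.choose_succ_self, Nat.cast_zero, zero_mul, add_zero]
        refine Finset.sum_congr rfl fun m hm => ?_
        have : j + 1 - m = (j - m) + 1 := by
          have := Finset.mem_range.1 hm
          omega
        rw [this, pow_succ]; ring
      rw [s1, Finset.sum_range_succ' _ (j + 1), Finset.sum_range_succ' _ (j + 1), Finset.mul_sum]
      have s2 : ∀ A B D F : ℂ, A = B - D → A + F = B + F - D := by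
        intro A B D F h; rw [h]; ring
      simp only [Nat.choose_zero_right]
      apply s2
      rw [← Finset.sum_sub_distrib]
      refine Finset.sum_congr rfl fun m hm => ?_
      have hd : (k.descFactorial (m + 1) : ℂ) = k * ((k - 1).descFactorial m : ℂ) := by
        cases k with
        | zero => simp
        | succ k => rw [Nat.succ_descFactorial_succ]; simp
      have e1 : j + 1 - (m + 1) = j - m := by omega
      have e2 : k - (m + 1) = k - 1 - m := by omega
      rw [Nat.choose_succ_succ, hd, e1, e2]
      push_cast
      ring
    rw [key]
    ring

lemma Am_laguerre (h : ℝ) (hh : 0 < h) (z ζ : ℝ) (j k : ℕ) (hjk : j ≤ k) :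
    Am h z ζ j k = (2 / h : ℂ) ^ k * (-1) ^ j * (z + Complex.I * ζ) ^ (k - j) * (j.factorial : ℂ) *
      ((laguerre j (k - j) ((2 / h) * (z ^ 2 + ζ ^ 2)) : ℝ) : ℂ) * Ef h ζ 1 := by
  rw [Am_closed h hh]
  congr 1
  rw [← Finset.sum_range_reflect, laguerre]
  push_cast
  rw [Finset.mul_sum, Finset.mul_sum]
  refine Finset.sum_congr rfl fun m hm => ?_
  have hm' : m ≤ j := Nat.lt_succ_iff.1 (Finset.mem_range.1 hm)
  have w2 : (z : ℂ) ^ 2 + (ζ : ℂ) ^ 2 = (z - Complex.I * ζ) * (z + Complex.I * ζ) := by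
    linear_combination (ζ : ℂ) ^ 2 * Complex.I_sq
  rw [w2]
  obtain ⟨n, rfl⟩ := Nat.exists_eq_add_of_le hm'
  obtain ⟨d, rfl⟩ := Nat.exists_eq_add_of_le hjk
  have e1 : m + n + 1 - 1 - m = n := by omega
  have e2 : m + n - n = m := by omega
  have e3 : m + n + d - n = m + d := by omega
  have e4 : m + n + d - (m + n) = d := by omega
  have e5 : m + n - m = n := by omega
  simp only [e2, e3, e4, e5]
  have f1 : (((m + n).choose n : ℕ) : ℂ) = (m + n).factorial / (m.factorial * n.factorial) := by
    rw [Nat.cast_choose ℂ (by omega), e2]; ring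
  have f2 : (((m + n + d).descFactorial n : ℕ) : ℂ) = (m + n + d).factorial / (m + d).factorial := by
    rw [eq_div_iff (by exact_mod_cast Nat.factorial_ne_zero _)]
    have := Nat.factorial_mul_descFactorial (n := m + n + d) (k := n) (by omega)
    rw [e3] at this
    rw [← this]; push_cast; ring
  rw [f1, f2, add_comm d m]
  generalize (z - Complex.I * ζ : ℂ) = v
  generalize (z + Complex.I * ζ : ℂ) = u
  generalize (2 / h : ℂ) = a
  have sgn : ((-1 : ℂ)) ^ n = (-1) ^ (m + n) * (-1) ^ m := by
    rw [pow_add, mul_right_comm, ← mul_pow]; simp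
  rw [sgn, neg_pow (a * (v * u)), mul_pow, mul_pow, mul_pow, pow_add a, pow_add a, pow_add a,
    pow_add u]
  ring

lemma psi_eq (h : ℝ) (n : ℕ) (x : ℝ) :
    psi h n x = (1 / √(n.factorial : ℝ)) * (h / 2) ^ ((n : ℝ) / 2) * (Hp (2 / h) n).eval x := by
  rw [psi, iter_eq]
  have h1 : Real.exp (x ^ 2 / h) * Real.exp (-x ^ 2 / h) = 1 := by
    rw [← Real.exp_add, neg_div]; simp
  have h2 : ((-1 : ℝ)) ^ n * (-1) ^ n = 1 := by rw [← mul_pow]; simp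
  linear_combination ((1 / √(n.factorial : ℝ)) * (h / 2) ^ ((n : ℝ) / 2) *
    (Hp (2 / h) n).eval x) * ((-1 : ℝ) ^ n * (-1) ^ n * h1 + h2)

lemma wig_Am (h : ℝ) (j k : ℕ) (z ζ : ℝ) :
    wigner1 h (fun t => (psi h j t : ℂ)) (fun t => (psi h k t : ℂ)) z ζ =
      (Real.exp (ζ ^ 2 / h) : ℂ) * (((π * h) ^ (-(1 : ℝ) / 2) : ℝ) : ℂ) *
      (((1 / √(j.factorial : ℝ)) * (h / 2) ^ ((j : ℝ) / 2) : ℝ) : ℂ) *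
      (((1 / √(k.factorial : ℝ)) * (h / 2) ^ ((k : ℝ) / 2) : ℝ) : ℂ) * Am h z ζ j k := by
  have hassoc : ∀ A B c D J : ℂ, A * B * c * D * J = A * ((B * c * D) * J) := by
    intros; ring
  rw [wigner1, Am, Ef, hassoc]
  congr 1
  rw [← integral_const_mul]
  congr 1
  funext t
  rw [psi_eq, psi_eq, Complex.conj_ofReal]
  have hG : Gw h ζ t = Complex.exp (-2 * Complex.I * (ζ : ℂ) * (t : ℂ) / (h : ℂ)) *
      (Real.exp (-t ^ 2 / h) : ℂ) := by
    rw [Gw, Complex.ofReal_exp, ← Complex.exp_add]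
    congr 1
    push_cast
    ring
  have hP : (Pp h z j).eval (t : ℂ) = (((Hp (2 / h) j).eval (z + t) : ℝ) : ℂ) := by
    rw [Pp, eval_comp, eval_map_algebraMap]
    simp only [eval_add, eval_C, eval_X]
    rw [← Complex.ofReal_add, ← Complex.coe_algebraMap, aeval_algebraMap_apply_eq_algebraMap_eval]
  have hQ : (Qp h z k).eval (t : ℂ) = (((Hp (2 / h) k).eval (z - t) : ℝ) : ℂ) := by
    rw [Qp, eval_comp, eval_map_algebraMap]
    simp only [eval_sub, eval_C, eval_X]
    rw [← Complex.ofReal_sub, ← Complex.coe_algebraMap, aeval_algebraMap_apply_eq_algebraMap_eval]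
  rw [hG, eval_mul, hP, hQ]
  simp only [Complex.ofReal_mul]
  ring

lemma wig_le (h : ℝ) (hh : 0 < h) (j k : ℕ) (x ξ : ℝ) (hjk : j ≤ k) :
      wigner1 h (fun t => (psi h j t : ℂ)) (fun t => (psi h k t : ℂ)) x ξ =
        (Real.sqrt ((Nat.factorial j : ℝ) / (Nat.factorial k : ℝ)) : ℂ) *
          ((x : ℂ) + Complex.I * (ξ : ℂ)) ^ (k - j) * (-1 : ℂ) ^ j *
          (((2 / h) ^ (((k : ℝ) - (j : ℝ)) / 2) : ℝ) : ℂ) *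
          ((laguerre j (k - j) ((2 / h) * (x ^ 2 + ξ ^ 2)) : ℝ) : ℂ) := by
  rw [wig_Am, Am_laguerre h hh x ξ j k hjk, Ef_one h hh]
  have r : Real.exp (ξ ^ 2 / h) * (π * h) ^ (-(1 : ℝ) / 2) *
      ((1 / √(j.factorial : ℝ)) * (h / 2) ^ ((j : ℝ) / 2)) *
      ((1 / √(k.factorial : ℝ)) * (h / 2) ^ ((k : ℝ) / 2)) * ((2 / h) ^ k * j.factorial *
      ((π * h) ^ ((1 : ℝ) / 2) * Real.exp (-ξ ^ 2 / h)))
      = √((Nat.factorial j : ℝ) / (Nat.factorial k : ℝ)) *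
        (2 / h) ^ (((k : ℝ) - (j : ℝ)) / 2) := by
    have h1 : Real.exp (ξ ^ 2 / h) * Real.exp (-ξ ^ 2 / h) = 1 := by
      rw [← Real.exp_add, neg_div]; simp
    have h2 : (π * h) ^ (-(1 : ℝ) / 2) * (π * h) ^ ((1 : ℝ) / 2) = 1 := by
      rw [← Real.rpow_add (by positivity)]; norm_num
    have h3 : (h / 2) ^ ((j : ℝ) / 2) * (h / 2) ^ ((k : ℝ) / 2) * (2 / h) ^ k
        = (2 / h) ^ (((k : ℝ) - (j : ℝ)) / 2) := by
      have ha : 0 < 2 / h := by positivity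
      have : h / 2 = (2 / h)⁻¹ := by rw [inv_div]
      rw [this, Real.inv_rpow ha.le, Real.inv_rpow ha.le, ← Real.rpow_neg ha.le,
        ← Real.rpow_neg ha.le, ← Real.rpow_natCast, ← Real.rpow_add ha, ← Real.rpow_add ha]
      congr 1
      ring
    have h4 : (1 / √(j.factorial : ℝ)) * (1 / √(k.factorial : ℝ)) * j.factorial
        = √((Nat.factorial j : ℝ) / (Nat.factorial k : ℝ)) := by
      have hj : (0 : ℝ) < j.factorial := by exact_mod_cast Nat.factorial_pos j
      have hk : (0 : ℝ) < k.factorial := by exact_mod_cast Nat.factorial_pos k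
      rw [Real.sqrt_div hj.le]
      have := Real.mul_self_sqrt hj.le
      have a1 := (Real.sqrt_pos.2 hj).ne'
      have a2 := (Real.sqrt_pos.2 hk).ne'
      field_simp
      nlinarith
    rw [← h3, ← h4]
    calc _ = (Real.exp (ξ ^ 2 / h) * Real.exp (-ξ ^ 2 / h)) *
          ((π * h) ^ (-(1 : ℝ) / 2) * (π * h) ^ ((1 : ℝ) / 2)) *
          ((1 / √(j.factorial : ℝ)) * (1 / √(k.factorial : ℝ)) * j.factorial *
          ((h / 2) ^ ((j : ℝ) / 2) * (h / 2) ^ ((k : ℝ) / 2) * (2 / h) ^ k)) := by ring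
      _ = _ := by rw [h1, h2]; ring
  have rc := congrArg (fun y : ℝ => (y : ℂ)) r
  simp only [Complex.ofReal_mul, Complex.ofReal_pow, Complex.ofReal_natCast, Complex.ofReal_div,
    Complex.ofReal_ofNat] at rc ⊢
  linear_combination (((x : ℂ) + Complex.I * (ξ : ℂ)) ^ (k - j) * (-1 : ℂ) ^ j *
    ((laguerre j (k - j) ((2 / h) * (x ^ 2 + ξ ^ 2)) : ℝ) : ℂ)) * rc

lemma wig_symm (h : ℝ) (f g : ℝ → ℝ) (x ξ : ℝ) :
    wigner1 h (fun t => (f t : ℂ)) (fun t => (g t : ℂ)) x ξ =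
      wigner1 h (fun t => (g t : ℂ)) (fun t => (f t : ℂ)) x (-ξ) := by
  simp only [wigner1, neg_sq, Complex.conj_ofReal]
  congr 1
  rw [← integral_neg_eq_self]
  congr 1
  funext t
  simp only [neg_sq, sub_neg_eq_add, ← sub_eq_add_neg, Complex.ofReal_neg, mul_neg, neg_mul]
  ring

end WignerAux

/-- The Wigner functions of pairs of Hermite functions, expressed with Laguerre
polynomials. -/
theorem wigner_hermite_laguerre (h : ℝ) (hh : 0 < h) (j k : ℕ) (x ξ : ℝ) :
    (j ≤ k →
      wigner1 h (fun t => (psi h j t : ℂ)) (fun t => (psi h k t : ℂ)) x ξ =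
        (Real.sqrt ((Nat.factorial j : ℝ) / (Nat.factorial k : ℝ)) : ℂ) *
          ((x : ℂ) + Complex.I * (ξ : ℂ)) ^ (k - j) * (-1 : ℂ) ^ j *
          (((2 / h) ^ (((k : ℝ) - (j : ℝ)) / 2) : ℝ) : ℂ) *
          ((laguerre j (k - j) ((2 / h) * (x ^ 2 + ξ ^ 2)) : ℝ) : ℂ)) ∧
    (k ≤ j →
      wigner1 h (fun t => (psi h j t : ℂ)) (fun t => (psi h k t : ℂ)) x ξ =
        (Real.sqrt ((Nat.factorial k : ℝ) / (Nat.factorial j : ℝ)) : ℂ) *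
          ((x : ℂ) - Complex.I * (ξ : ℂ)) ^ (j - k) * (-1 : ℂ) ^ k *
          (((2 / h) ^ (((j : ℝ) - (k : ℝ)) / 2) : ℝ) : ℂ) *
          ((laguerre k (j - k) ((2 / h) * (x ^ 2 + ξ ^ 2)) : ℝ) : ℂ)) := by
  refine ⟨wig_le h hh j k x ξ, fun hkj => ?_⟩
  rw [wig_symm, wig_le h hh k j x (-ξ) hkj]
  simp only [neg_sq, Complex.ofReal_neg, mul_neg, ← sub_eq_add_neg]
end

section
/- Fix h > 0. Let P : ℝ → ℝ be a C¹ function such that P and P′ are at most polynomially increasing. Let s ∈ ℕ, n ∈ ℕ*, and ε = 1 or −1. Let F : ℝ² → ℝ be a C^n function which, together with all its partial derivatives of order ≤ n, is at most polynomially increasing. Then (−s·i·ε)^n ∫_{ℝ²} F(x,ξ)·(x+iεξ)^s·P(x²+ξ²)·e^{−(x²+ξ²)/h} dx dξ = ∫_{ℝ²} ([x∂_ξ − ξ∂_x]^n F)(x,ξ)·(x+iεξ)^s·P(x²+ξ²)·e^{−(x²+ξ²)/h} dx dξ. -/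
open Real MeasureTheory

/-- The first-order differential operator `[x∂_ξ − ξ∂_x]` acting on functions on `ℝ²`. -/
noncomputable def rotOp (F : ℝ × ℝ → ℝ) : ℝ × ℝ → ℝ := fun p =>
  p.1 * fderiv ℝ F p (0, 1) - p.2 * fderiv ℝ F p (1, 0)


/-- Polynomial growth. -/
def PG {E : Type*} [Norm E] (f : ℝ × ℝ → E) : Prop :=
  ∃ (C : ℝ) (m : ℕ), ∀ p : ℝ × ℝ, ‖f p‖ ≤ C * (1 + ‖p‖) ^ m

lemma PG.nonneg {E : Type*} [NormedAddCommGroup E] {f : ℝ × ℝ → E} (hf : PG f) :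
    ∃ (C : ℝ) (m : ℕ), 0 ≤ C ∧ ∀ p : ℝ × ℝ, ‖f p‖ ≤ C * (1 + ‖p‖) ^ m := by
  obtain ⟨C, m, h⟩ := hf
  refine ⟨C, m, ?_, h⟩
  have := (norm_nonneg _).trans (h 0)
  simpa using this

lemma PG.of_le {E E' : Type*} [NormedAddCommGroup E] [NormedAddCommGroup E']
    {f : ℝ × ℝ → E} {g : ℝ × ℝ → E'}
    (hf : PG f) (h : ∀ p, ‖g p‖ ≤ ‖f p‖) : PG g := by
  obtain ⟨C, m, h'⟩ := hf
  exact ⟨C, m, fun p => (h p).trans (h' p)⟩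

lemma PG.mul {E : Type*} [NormedRing E] {f g : ℝ × ℝ → E} (hf : PG f) (hg : PG g) :
    PG (fun p => f p * g p) := by
  obtain ⟨C, m, hC, h⟩ := hf.nonneg
  obtain ⟨D, k, hD, h'⟩ := hg.nonneg
  refine ⟨C * D, m + k, fun p => (norm_mul_le _ _).trans ?_⟩
  calc ‖f p‖ * ‖g p‖ ≤ (C * (1 + ‖p‖) ^ m) * (D * (1 + ‖p‖) ^ k) :=
        mul_le_mul (h p) (h' p) (norm_nonneg _) (by positivity)
    _ = _ := by ring

lemma PG.add {E : Type*} [NormedAddCommGroup E] {f g : ℝ × ℝ → E} (hf : PG f) (hg : PG g) :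
    PG (fun p => f p + g p) := by
  obtain ⟨C, m, hC, h⟩ := hf.nonneg
  obtain ⟨D, k, hD, h'⟩ := hg.nonneg
  refine ⟨C + D, m + k, fun p => (norm_add_le _ _).trans ?_⟩
  have h1 : (1 : ℝ) ≤ 1 + ‖p‖ := by linarith [norm_nonneg p]
  have e1 : (1 + ‖p‖) ^ m ≤ (1 + ‖p‖) ^ (m + k) := pow_le_pow_right₀ h1 (by omega)
  have e2 : (1 + ‖p‖) ^ k ≤ (1 + ‖p‖) ^ (m + k) := pow_le_pow_right₀ h1 (by omega)
  have := mul_le_mul_of_nonneg_left e1 hC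
  have := mul_le_mul_of_nonneg_left e2 hD
  linarith [h p, h' p]

lemma PG.const {E : Type*} [NormedAddCommGroup E] (c : E) : PG (fun _ => c) :=
  ⟨‖c‖, 0, fun p => by simp⟩

lemma PG.sum {ι : Type*} {E : Type*} [NormedAddCommGroup E] (s : Finset ι) (f : ι → ℝ × ℝ → E)
    (h : ∀ i ∈ s, PG (f i)) : PG (fun p => ∑ i ∈ s, f i p) := by
  classical
  induction s using Finset.induction_on with
  | empty => simpa using PG.const (0 : E)
  | insert a s ha ih =>
    simp only [Finset.sum_insert ha]
    exact (h a (by simp)).add (ih fun i hi => h i (by simp [hi]))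

lemma PG.norm {E : Type*} [NormedAddCommGroup E] {f : ℝ × ℝ → E} (hf : PG f) :
    PG (fun p => ‖f p‖) := hf.of_le (fun p => by simp)

/-- `C^n` with all derivatives up to order `n` of polynomial growth. -/
def PGn (n : ℕ) (F : ℝ × ℝ → ℝ) : Prop :=
  ContDiff ℝ n F ∧ ∀ k : ℕ, k ≤ n → PG (iteratedFDeriv ℝ k F)

lemma PGn.mul {n : ℕ} {f g : ℝ × ℝ → ℝ} (hf : PGn n f) (hg : PGn n g) :
    PGn n (fun p => f p * g p) := by
  refine ⟨hf.1.mul hg.1, fun k hk => ?_⟩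
  have : PG (fun p => ∑ i ∈ Finset.range (k + 1),
      (k.choose i : ℝ) * ‖iteratedFDeriv ℝ i f p‖ * ‖iteratedFDeriv ℝ (k - i) g p‖) := by
    refine PG.sum _ _ fun i hi => ?_
    have hi' : i < k + 1 := by simpa using hi
    exact ((PG.const _).mul (hf.2 i (by omega)).norm).mul (hg.2 (k - i) (by omega)).norm
  refine this.of_le fun p => ?_
  refine (norm_iteratedFDeriv_mul_le hf.1 hg.1 p (by exact_mod_cast hk)).trans (le_abs_self _)

lemma PGn.sub {n : ℕ} {f g : ℝ × ℝ → ℝ} (hf : PGn n f) (hg : PGn n g) :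
    PGn n (fun p => f p - g p) := by
  refine ⟨hf.1.sub hg.1, fun k hk => ?_⟩
  refine ((hf.2 k hk).norm.add (hg.2 k hk).norm).of_le fun p => ?_
  have hk' : ((k : ℕ) : WithTop ℕ∞) ≤ n := by exact_mod_cast hk
  have := iteratedFDeriv_sub_apply (𝕜 := ℝ) (i := k) (x := p) (hf.1.of_le hk').contDiffAt
    (hg.1.of_le hk').contDiffAt
  change ‖iteratedFDeriv ℝ k (f - g) p‖ ≤ _
  rw [this]
  exact (norm_sub_le _ _).trans (le_abs_self _)

lemma PGn.of_temperate {f : ℝ × ℝ → ℝ} (hf : f.HasTemperateGrowth) (n : ℕ) : PGn n f := by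
  refine ⟨hf.1.of_le (by exact_mod_cast le_top), fun k _ => ?_⟩
  obtain ⟨m, C, h⟩ := hf.2 k
  exact ⟨C, m, h⟩

lemma PGn.fderiv_apply {n : ℕ} {f : ℝ × ℝ → ℝ} (hf : PGn (n + 1) f) (v : ℝ × ℝ) :
    PGn n (fun p => fderiv ℝ f p v) := by
  have hc : ContDiff ℝ n (fderiv ℝ f) := hf.1.fderiv_right (by norm_cast)
  refine ⟨hc.clm_apply contDiff_const, fun k hk => ?_⟩
  refine ((PG.const ‖v‖).mul (hf.2 (k + 1) (by omega)).norm).of_le fun p => ?_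
  refine (norm_iteratedFDeriv_clm_apply_const (hc.contDiffAt (x := p))
    (by exact_mod_cast hk)).trans ?_
  rw [norm_iteratedFDeriv_fderiv]
  exact le_abs_self _

lemma PGn.rotOp {n : ℕ} {f : ℝ × ℝ → ℝ} (hf : PGn (n + 1) f) : PGn n (rotOp f) := by
  have h1 := PGn.of_temperate (ContinuousLinearMap.fst ℝ ℝ ℝ).hasTemperateGrowth n
  have h2 := PGn.of_temperate (ContinuousLinearMap.snd ℝ ℝ ℝ).hasTemperateGrowth n
  exact (h1.mul (hf.fderiv_apply _)).sub (h2.mul (hf.fderiv_apply _))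

lemma PGn.pg {n : ℕ} {f : ℝ × ℝ → ℝ} (hf : PGn n f) : PG f :=
  (hf.2 0 (by omega)).of_le fun p => by simp

/-- Continuous with polynomial growth. -/
def PC (f : ℝ × ℝ → ℂ) : Prop := Continuous f ∧ PG f

lemma PC.mul {f g : ℝ × ℝ → ℂ} (hf : PC f) (hg : PC g) : PC (fun p => f p * g p) :=
  ⟨hf.1.mul hg.1, hf.2.mul hg.2⟩

lemma PC.add {f g : ℝ × ℝ → ℂ} (hf : PC f) (hg : PC g) : PC (fun p => f p + g p) :=
  ⟨hf.1.add hg.1, hf.2.add hg.2⟩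

lemma PC.const (c : ℂ) : PC (fun _ => c) := ⟨continuous_const, PG.const c⟩

lemma PC.pow {f : ℝ × ℝ → ℂ} (hf : PC f) (s : ℕ) : PC (fun p => f p ^ s) := by
  induction s with
  | zero => simpa using PC.const 1
  | succ s ih => simpa only [pow_succ] using ih.mul hf

lemma PC.fst : PC (fun p => (p.1 : ℂ)) :=
  ⟨by fun_prop, 1, 1, fun p => by
    have := norm_fst_le p
    simp only [Complex.norm_real]; linarith⟩

lemma PC.snd : PC (fun p => (p.2 : ℂ)) :=
  ⟨by fun_prop, 1, 1, fun p => by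
    have := norm_snd_le p
    simp only [Complex.norm_real]; linarith⟩

lemma PGn.pc {n : ℕ} {f : ℝ × ℝ → ℝ} (hf : PGn n f) : PC (fun p => (f p : ℂ)) :=
  ⟨Complex.continuous_ofReal.comp hf.1.continuous, hf.pg.of_le fun p => by simp⟩

lemma PC.comp_sq {Q : ℝ → ℝ} (hQ : Continuous Q)
    (hg : ∃ (C : ℝ) (m : ℕ), ∀ x : ℝ, |Q x| ≤ C * (1 + |x|) ^ m) :
    PC (fun p => (Q (p.1 ^ 2 + p.2 ^ 2) : ℂ)) := by
  refine ⟨by fun_prop, ?_⟩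
  obtain ⟨C, m, h⟩ := hg
  have hC : 0 ≤ C := by simpa using (abs_nonneg _).trans (h 0)
  refine ⟨C * 2 ^ m, 2 * m, fun p => ?_⟩
  have h1 : |p.1| ≤ ‖p‖ := norm_fst_le p
  have h2 : |p.2| ≤ ‖p‖ := norm_snd_le p
  rw [Complex.norm_real, Real.norm_eq_abs]
  refine (h _).trans ?_
  rw [pow_mul, mul_assoc, ← mul_pow]
  have h3 := pow_le_pow_left₀ (abs_nonneg _) h1 2
  have h4 := pow_le_pow_left₀ (abs_nonneg _) h2 2
  rw [sq_abs] at h3 h4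
  have h5 : |p.1 ^ 2 + p.2 ^ 2| = p.1 ^ 2 + p.2 ^ 2 := abs_of_nonneg (by positivity)
  have h6 : 1 + |p.1 ^ 2 + p.2 ^ 2| ≤ 2 * (1 + ‖p‖) ^ 2 := by
    rw [h5]; nlinarith [norm_nonneg p]
  gcongr

lemma PC.integrable {f : ℝ × ℝ → ℂ} (hf : PC f) {h : ℝ} (hh : 0 < h) :
    Integrable (fun p : ℝ × ℝ => f p * (Real.exp (-(p.1 ^ 2 + p.2 ^ 2) / h) : ℂ)) := by
  obtain ⟨hc, hg⟩ := hf
  obtain ⟨C, m, hC, hb⟩ := hg.nonneg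
  have hb2 : 0 < 1 / (2 * h) := by positivity
  have I1 := integrable_exp_neg_mul_sq hb2
  have I2 : Integrable (fun p : ℝ × ℝ => Real.exp (-(1 / (2 * h)) * p.1 ^ 2) *
    Real.exp (-(1 / (2 * h)) * p.2 ^ 2)) := I1.mul_prod I1
  refine (I2.const_mul (C * (m.factorial * Real.exp (1 + h)))).mono'
    (Continuous.aestronglyMeasurable (by fun_prop)) (Filter.Eventually.of_forall fun p => ?_)
  rw [norm_mul, Complex.norm_real, Real.norm_eq_abs, Real.abs_exp]
  have e1 : (1 + ‖p‖) ^ m ≤ m.factorial * Real.exp (1 + ‖p‖) := by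
    have := Real.pow_div_factorial_le_exp (x := 1 + ‖p‖) (by positivity) m
    rwa [div_le_iff₀' (by positivity)] at this
  have e0 : ‖p‖ ^ 2 ≤ p.1 ^ 2 + p.2 ^ 2 := by
    rw [Prod.norm_def]
    rcases max_choice ‖p.1‖ ‖p.2‖ with h | h <;> rw [h, Real.norm_eq_abs, sq_abs] <;>
      nlinarith [sq_nonneg p.1, sq_nonneg p.2]
  have e2 : ‖p‖ ≤ h + (p.1 ^ 2 + p.2 ^ 2) / (2 * h) := by
    have : ‖p‖ ≤ h + ‖p‖ ^ 2 / (2 * h) := by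
      rw [← sub_le_iff_le_add', le_div_iff₀ (by positivity)]
      nlinarith [sq_nonneg (‖p‖ - h), sq_nonneg h]
    refine this.trans ?_
    gcongr
  calc ‖f p‖ * Real.exp (-(p.1 ^ 2 + p.2 ^ 2) / h)
      ≤ (C * (m.factorial * Real.exp (1 + ‖p‖))) * Real.exp (-(p.1 ^ 2 + p.2 ^ 2) / h) := by
        gcongr
        exact (hb p).trans (by gcongr)
    _ ≤ (C * (m.factorial * Real.exp (1 + (h + (p.1 ^ 2 + p.2 ^ 2) / (2 * h))))) *
          Real.exp (-(p.1 ^ 2 + p.2 ^ 2) / h) := by gcongr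
    _ = _ := by
        rw [mul_assoc, mul_assoc, mul_assoc, mul_assoc, ← Real.exp_add, ← Real.exp_add,
          ← Real.exp_add]
        congr 3
        field_simp
        ring

/-- derivative of the weight along a curve -/
lemma weight_deriv (h : ℝ) (P : ℝ → ℝ) (hP : ContDiff ℝ 1 P) (s : ℕ) (ε : ℝ)
    (a b : ℝ → ℝ) (a' b' t : ℝ) (ha : HasDerivAt a a' t) (hb : HasDerivAt b b' t) :
    HasDerivAt (fun t => ((a t : ℂ) + Complex.I * (ε : ℂ) * (b t : ℂ)) ^ s *
        (P (a t ^ 2 + b t ^ 2) : ℂ) * (Real.exp (-(a t ^ 2 + b t ^ 2) / h) : ℂ))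
      (((s * ((a t : ℂ) + Complex.I * (ε : ℂ) * (b t : ℂ)) ^ (s - 1) *
          (a' + Complex.I * ε * b')) * (P (a t ^ 2 + b t ^ 2) : ℂ)
        + ((a t : ℂ) + Complex.I * (ε : ℂ) * (b t : ℂ)) ^ s *
          (((deriv P (a t ^ 2 + b t ^ 2) : ℝ) : ℂ) * (2 * a t * a' + 2 * b t * b'))
        + ((a t : ℂ) + Complex.I * (ε : ℂ) * (b t : ℂ)) ^ s * (P (a t ^ 2 + b t ^ 2) : ℂ) *
          ((-1 / h : ℂ) * (2 * a t * a' + 2 * b t * b'))) *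
        (Real.exp (-(a t ^ 2 + b t ^ 2) / h) : ℂ)) t := by
  have h1 : HasDerivAt (fun t => ((a t : ℂ) + Complex.I * (ε : ℂ) * (b t : ℂ)))
      (a' + Complex.I * ε * b') t := ha.ofReal_comp.add (hb.ofReal_comp.const_mul _)
  have h2 : HasDerivAt (fun t => a t ^ 2 + b t ^ 2) (2 * a t * a' + 2 * b t * b') t := by
    refine ((ha.pow 2).add (hb.pow 2)).congr_deriv ?_
    norm_num
  have h3 : HasDerivAt (fun t => P (a t ^ 2 + b t ^ 2))
      (deriv P (a t ^ 2 + b t ^ 2) * (2 * a t * a' + 2 * b t * b')) t :=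
    ((hP.differentiable (by norm_num)) _).hasDerivAt.comp t h2
  have h4 := ((h2.neg.div_const h).exp)
  have h5 := ((h1.pow s).mul h3.ofReal_comp).mul h4.ofReal_comp
  refine h5.congr_deriv ?_
  simp only [Pi.pow_apply, Pi.mul_apply, Pi.neg_apply]
  push_cast
  ring

lemma one_step (h : ℝ) (hh : 0 < h)
    (P : ℝ → ℝ) (hP : ContDiff ℝ 1 P)
    (hPgrowth : ∃ (C : ℝ) (m : ℕ), ∀ x : ℝ, |P x| ≤ C * (1 + |x|) ^ m)
    (hP'growth : ∃ (C : ℝ) (m : ℕ), ∀ x : ℝ, |deriv P x| ≤ C * (1 + |x|) ^ m)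
    (s : ℕ) (ε : ℝ) (hε : ε = 1 ∨ ε = -1)
    (F : ℝ × ℝ → ℝ) (hF : PGn 1 F) :
    (-(s : ℂ) * Complex.I * (ε : ℂ)) *
      ∫ p : ℝ × ℝ, (F p : ℂ) * ((p.1 : ℂ) + Complex.I * (ε : ℂ) * (p.2 : ℂ)) ^ s *
        (P (p.1 ^ 2 + p.2 ^ 2) : ℂ) * (Real.exp (-(p.1 ^ 2 + p.2 ^ 2) / h) : ℂ) =
    ∫ p : ℝ × ℝ, ((rotOp F) p : ℂ) *
        ((p.1 : ℂ) + Complex.I * (ε : ℂ) * (p.2 : ℂ)) ^ s *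
        (P (p.1 ^ 2 + p.2 ^ 2) : ℂ) * (Real.exp (-(p.1 ^ 2 + p.2 ^ 2) / h) : ℂ) := by
  have cz : PC (fun p => (p.1 : ℂ) + Complex.I * (ε : ℂ) * (p.2 : ℂ)) :=
    PC.fst.add ((PC.const _).mul PC.snd)
  have cP := PC.comp_sq hP.continuous hPgrowth
  have cP' := PC.comp_sq (hP.continuous_deriv (by norm_num)) hP'growth
  have cF := hF.pc
  have cD : ∀ v : ℝ × ℝ, PC (fun p => ((fderiv ℝ F p v : ℝ) : ℂ)) :=
    fun v => (PGn.fderiv_apply (n := 0) hF v).pc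
  -- weight and its logarithmic-type derivative
  let Z : ℝ × ℝ → ℂ := fun p => (p.1 : ℂ) + Complex.I * (ε : ℂ) * (p.2 : ℂ)
  let Q : ℝ × ℝ → ℂ := fun p => (P (p.1 ^ 2 + p.2 ^ 2) : ℂ)
  let Q' : ℝ × ℝ → ℂ := fun p => ((deriv P (p.1 ^ 2 + p.2 ^ 2) : ℝ) : ℂ)
  let E : ℝ × ℝ → ℂ := fun p => (Real.exp (-(p.1 ^ 2 + p.2 ^ 2) / h) : ℂ)
  let D : ℝ × ℝ → ℝ × ℝ → ℂ := fun v p =>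
    (s * Z p ^ (s - 1) * (v.1 + Complex.I * ε * v.2)) * Q p
      + Z p ^ s * (Q' p * (2 * p.1 * v.1 + 2 * p.2 * v.2))
      + Z p ^ s * Q p * ((-1 / h : ℂ) * (2 * p.1 * v.1 + 2 * p.2 * v.2))
  have cL : ∀ v : ℝ × ℝ, PC (fun p => 2 * (p.1 : ℂ) * v.1 + 2 * p.2 * v.2) := fun v =>
    (((PC.const 2).mul PC.fst).mul (PC.const _)).add (((PC.const 2).mul PC.snd).mul (PC.const _))
  have cDD : ∀ v, PC (D v) := fun v =>
    (((((PC.const _).mul (cz.pow _)).mul (PC.const _)).mul cP).add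
      ((cz.pow s).mul (cP'.mul (cL v)))).add (((cz.pow s).mul cP).mul ((PC.const _).mul (cL v)))
  have key : ∀ (v : ℝ × ℝ) (c : ℝ × ℝ → ℂ), PC c → (∀ p (t : ℝ), c (p + t • v) = c p) →
      ∫ p, (F p : ℂ) * (c p * (D v p * E p)) =
        - ∫ p, ((fderiv ℝ F p v : ℝ) : ℂ) * (c p * (Z p ^ s * Q p * E p)) := by
    intro v c hc hcv
    refine integral_bilinear_hasLineDerivAt_right_eq_neg_left_of_integrable
      (B := ContinuousLinearMap.mul ℝ ℂ) (f := fun p => (F p : ℂ))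
      (f' := fun p => ((fderiv ℝ F p v : ℝ) : ℂ)) (g := fun p => c p * (Z p ^ s * Q p * E p))
      (g' := fun p => c p * (D v p * E p)) (v := v) ?_ ?_ ?_ ?_ ?_
    · refine (((cD v).mul (hc.mul ((cz.pow s).mul cP))).integrable hh).congr
        (Filter.Eventually.of_forall fun p => ?_)
      simp only [ContinuousLinearMap.mul_apply', Z, Q, E]; ring
    · refine ((cF.mul (hc.mul (cDD v))).integrable hh).congr
        (Filter.Eventually.of_forall fun p => ?_)
      simp only [ContinuousLinearMap.mul_apply', E]; ring
    · refine ((cF.mul (hc.mul ((cz.pow s).mul cP))).integrable hh).congr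
        (Filter.Eventually.of_forall fun p => ?_)
      simp only [ContinuousLinearMap.mul_apply', Z, Q, E]; ring
    · intro p _
      have := ((hF.1.differentiable (by norm_num)) p).hasFDerivAt.hasLineDerivAt v
      exact HasDerivAt.ofReal_comp this
    · intro p _
      have ha : HasDerivAt (fun t : ℝ => p.1 + t * v.1) v.1 0 := by
        simpa using ((hasDerivAt_id (0 : ℝ)).mul_const v.1).const_add p.1
      have hb : HasDerivAt (fun t : ℝ => p.2 + t * v.2) v.2 0 := by
        simpa using ((hasDerivAt_id (0 : ℝ)).mul_const v.2).const_add p.2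
      have := (weight_deriv h P hP s ε _ _ _ _ 0 ha hb).const_mul (c p)
      unfold HasLineDerivAt
      simp only [hcv]
      simpa [D, Z, Q, Q', E] using this
  have k1 := key (0, 1) (fun p => (p.1 : ℂ)) PC.fst (fun p t => by simp)
  have k2 := key (1, 0) (fun p => (p.2 : ℂ)) PC.snd (fun p t => by simp)
  have i1 : ∀ v (c : ℝ × ℝ → ℂ), PC c → Integrable (fun p => (F p : ℂ) * (c p * (D v p * E p))) := by
    intro v c hc
    refine ((cF.mul (hc.mul (cDD v))).integrable hh).congr
        (Filter.Eventually.of_forall fun p => ?_)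
    simp only [E]; ring
  have i2 : ∀ v (c : ℝ × ℝ → ℂ), PC c →
      Integrable (fun p => ((fderiv ℝ F p v : ℝ) : ℂ) * (c p * (Z p ^ s * Q p * E p))) := by
    intro v c hc
    refine (((cD v).mul (hc.mul ((cz.pow s).mul cP))).integrable hh).congr
        (Filter.Eventually.of_forall fun p => ?_)
    simp only [Z, Q, E]; ring
  have R : ∫ p : ℝ × ℝ, ((rotOp F) p : ℂ) *
        ((p.1 : ℂ) + Complex.I * (ε : ℂ) * (p.2 : ℂ)) ^ s *
        (P (p.1 ^ 2 + p.2 ^ 2) : ℂ) * (Real.exp (-(p.1 ^ 2 + p.2 ^ 2) / h) : ℂ) =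
      (∫ p, ((fderiv ℝ F p (0, 1) : ℝ) : ℂ) * ((p.1 : ℂ) * (Z p ^ s * Q p * E p))) -
      ∫ p, ((fderiv ℝ F p (1, 0) : ℝ) : ℂ) * ((p.2 : ℂ) * (Z p ^ s * Q p * E p)) := by
    rw [← integral_sub (i2 _ _ PC.fst) (i2 _ _ PC.snd)]
    congr 1; ext p
    simp only [rotOp, Z, Q, E]; push_cast; ring
  have hε2 : (ε : ℂ) ^ 2 = 1 := by rcases hε with rfl | rfl <;> norm_num
  have L : (-(s : ℂ) * Complex.I * (ε : ℂ)) *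
      ∫ p : ℝ × ℝ, (F p : ℂ) * ((p.1 : ℂ) + Complex.I * (ε : ℂ) * (p.2 : ℂ)) ^ s *
        (P (p.1 ^ 2 + p.2 ^ 2) : ℂ) * (Real.exp (-(p.1 ^ 2 + p.2 ^ 2) / h) : ℂ) =
      (∫ p, (F p : ℂ) * ((p.2 : ℂ) * (D (1, 0) p * E p))) -
      ∫ p, (F p : ℂ) * ((p.1 : ℂ) * (D (0, 1) p * E p)) := by
    rw [← integral_sub (i1 _ _ PC.snd) (i1 _ _ PC.fst), ← integral_const_mul]
    congr 1; ext p
    have hz : (s : ℂ) * Z p ^ s = s * Z p ^ (s - 1) * Z p := by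
      rcases s with _ | s
      · simp
      · simp [pow_succ, mul_assoc]
    have hz2 : (p.2 : ℂ) - Complex.I * ε * p.1 = - (Complex.I * ε) * Z p := by
      simp only [Z]
      linear_combination ((ε : ℂ) ^ 2 * p.2) * Complex.I_sq - (p.2 : ℂ) * hε2
    change (-(s : ℂ) * Complex.I * (ε : ℂ)) * ((F p : ℂ) * Z p ^ s * Q p * E p) = _
    simp only [D]
    push_cast
    linear_combination (-(Complex.I * ε * F p * Q p * E p)) * hz
      - (s * Z p ^ (s - 1) * F p * Q p * E p) * hz2
  rw [L, R, k1, k2]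
  ring


/-- The integration-by-parts lemma for the operator `[x∂_ξ − ξ∂_x]`. -/
theorem ipp_rotation (h : ℝ) (hh : 0 < h)
    (P : ℝ → ℝ) (hP : ContDiff ℝ 1 P)
    (hPgrowth : ∃ (C : ℝ) (m : ℕ), ∀ x : ℝ, |P x| ≤ C * (1 + |x|) ^ m)
    (hP'growth : ∃ (C : ℝ) (m : ℕ), ∀ x : ℝ, |deriv P x| ≤ C * (1 + |x|) ^ m)
    (s : ℕ) (n : ℕ) (hn : 1 ≤ n) (ε : ℝ) (hε : ε = 1 ∨ ε = -1)
    (F : ℝ × ℝ → ℝ) (hF : ContDiff ℝ n F)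
    (hFgrowth : ∀ k : ℕ, k ≤ n → ∃ (C : ℝ) (m : ℕ), ∀ p : ℝ × ℝ,
      ‖iteratedFDeriv ℝ k F p‖ ≤ C * (1 + ‖p‖) ^ m) :
    (-(s : ℂ) * Complex.I * (ε : ℂ)) ^ n *
      ∫ p : ℝ × ℝ, (F p : ℂ) * ((p.1 : ℂ) + Complex.I * (ε : ℂ) * (p.2 : ℂ)) ^ s *
        (P (p.1 ^ 2 + p.2 ^ 2) : ℂ) * (Real.exp (-(p.1 ^ 2 + p.2 ^ 2) / h) : ℂ) =
    ∫ p : ℝ × ℝ, ((rotOp^[n] F) p : ℂ) *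
        ((p.1 : ℂ) + Complex.I * (ε : ℂ) * (p.2 : ℂ)) ^ s *
        (P (p.1 ^ 2 + p.2 ^ 2) : ℂ) * (Real.exp (-(p.1 ^ 2 + p.2 ^ 2) / h) : ℂ) := by
  have main : ∀ (n : ℕ) (F : ℝ × ℝ → ℝ), PGn n F →
      (-(s : ℂ) * Complex.I * (ε : ℂ)) ^ n *
      ∫ p : ℝ × ℝ, (F p : ℂ) * ((p.1 : ℂ) + Complex.I * (ε : ℂ) * (p.2 : ℂ)) ^ s *
        (P (p.1 ^ 2 + p.2 ^ 2) : ℂ) * (Real.exp (-(p.1 ^ 2 + p.2 ^ 2) / h) : ℂ) =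
      ∫ p : ℝ × ℝ, ((rotOp^[n] F) p : ℂ) *
        ((p.1 : ℂ) + Complex.I * (ε : ℂ) * (p.2 : ℂ)) ^ s *
        (P (p.1 ^ 2 + p.2 ^ 2) : ℂ) * (Real.exp (-(p.1 ^ 2 + p.2 ^ 2) / h) : ℂ) := by
    intro n
    induction n with
    | zero => intro F _; simp
    | succ n ih =>
      intro F hF
      have hF1 : PGn 1 F :=
        ⟨hF.1.of_le (by exact_mod_cast Nat.le_add_left 1 n), fun k hk => hF.2 k (by omega)⟩
      rw [Function.iterate_succ_apply, ← ih _ hF.rotOp,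
        ← one_step h hh P hP hPgrowth hP'growth s ε hε F hF1, pow_succ, mul_assoc]
  exact main n F ⟨hF, hFgrowth⟩
end

section
/- Fix h > 0. For all real numbers a > 0 and ν > 0: ∫_{ℝ²} e^{−ν a² (u²+v²)}·a²·(u² + v² − h/2)·e^{−(u²+v²)/h}·(πh)^{−1} du dv = (h a²/2)·(1 − hνa²)/(1 + hνa²)². In particular, this quantity is strictly negative whenever ν > 1/(h a²); this exhibits the non-positivity of the Weyl quantization of the positive symbol (u,v) ↦ e^{−νa²(u²+v²)} tested against the function √(2/h)·a·x, in the one-dimensional Gaussian setting. -/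
open Real MeasureTheory

lemma aux_int_sq {b : ℝ} (hb : 0 < b) : Integrable (fun x : ℝ => x ^ 2 * Real.exp (-b * x ^ 2)) := by
  have := integrable_rpow_mul_exp_neg_mul_sq hb (s := 2) (by norm_num)
  simpa using this

lemma aux_moment {b : ℝ} (hb : 0 < b) :
    ∫ x : ℝ, x ^ 2 * Real.exp (-b * x ^ 2) = √(π / b) / (2 * b) := by
  have h1 : Integrable (fun x : ℝ => x * Real.exp (-b * x ^ 2)) := by
    have := integrable_rpow_mul_exp_neg_mul_sq hb (s := 1) (by norm_num)
    simpa using this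
  have h0 := integrable_exp_neg_mul_sq hb
  have h2 := (aux_int_sq hb).const_mul (2 * b)
  have key := integral_eq_zero_of_hasDerivAt_of_integrable
    (f := fun x : ℝ => x * Real.exp (-b * x ^ 2))
    (f' := fun x : ℝ => Real.exp (-b * x ^ 2) - 2 * b * (x ^ 2 * Real.exp (-b * x ^ 2)))
    (fun x => by
      have hd : HasDerivAt (fun x : ℝ => -b * x ^ 2) (-b * (2 * x)) x := by
        simpa using (hasDerivAt_pow 2 x).const_mul (-b)
      have hm := (hasDerivAt_id' x).mul hd.exp
      refine HasDerivAt.congr_deriv hm ?_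
      ring)
    (h0.sub h2) h1
  rw [integral_sub h0 h2, integral_const_mul, integral_gaussian] at key
  rw [eq_div_iff (by positivity)]
  linarith

lemma aux_val (h : ℝ) (hh : 0 < h) (a ν : ℝ) (ha : 0 < a) (hν : 0 < ν) :
    (∫ p : ℝ × ℝ, Real.exp (-ν * a ^ 2 * (p.1 ^ 2 + p.2 ^ 2)) * a ^ 2 *
        (p.1 ^ 2 + p.2 ^ 2 - h / 2) * Real.exp (-(p.1 ^ 2 + p.2 ^ 2) / h) * (π * h)⁻¹) =
      (h * a ^ 2 / 2) * (1 - h * ν * a ^ 2) / (1 + h * ν * a ^ 2) ^ 2 := by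
  obtain ⟨b, hbdef⟩ : ∃ b, b = (1 + h * ν * a ^ 2) / h := ⟨_, rfl⟩
  have hpos : 0 < 1 + h * ν * a ^ 2 := by positivity
  have hb : 0 < b := by rw [hbdef]; positivity
  let g : ℝ → ℝ := fun x => Real.exp (-b * x ^ 2)
  let q : ℝ → ℝ := fun x => x ^ 2 * Real.exp (-b * x ^ 2)
  have hg : Integrable g := integrable_exp_neg_mul_sq hb
  have hq : Integrable q := aux_int_sq hb
  have e : (fun p : ℝ × ℝ => Real.exp (-ν * a ^ 2 * (p.1 ^ 2 + p.2 ^ 2)) * a ^ 2 *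
        (p.1 ^ 2 + p.2 ^ 2 - h / 2) * Real.exp (-(p.1 ^ 2 + p.2 ^ 2) / h) * (π * h)⁻¹) =
      fun p => (a ^ 2 * (π * h)⁻¹) *
        ((q p.1 * g p.2 + g p.1 * q p.2) - h / 2 * (g p.1 * g p.2)) := by
    funext p
    have : Real.exp (-ν * a ^ 2 * (p.1 ^ 2 + p.2 ^ 2)) * Real.exp (-(p.1 ^ 2 + p.2 ^ 2) / h)
        = Real.exp (-b * p.1 ^ 2) * Real.exp (-b * p.2 ^ 2) := by
      rw [← Real.exp_add, ← Real.exp_add, hbdef]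
      congr 1
      field_simp
      ring
    simp only [g, q]
    linear_combination (a ^ 2 * (p.1 ^ 2 + p.2 ^ 2 - h / 2) * (π * h)⁻¹) * this
  have i1 : Integrable (fun p : ℝ × ℝ => q p.1 * g p.2) := hq.mul_prod hg
  have i2 : Integrable (fun p : ℝ × ℝ => g p.1 * q p.2) := hg.mul_prod hq
  have i3 : Integrable (fun p : ℝ × ℝ => g p.1 * g p.2) := hg.mul_prod hg
  have v1 : ∫ p : ℝ × ℝ, q p.1 * g p.2 = (∫ x, q x) * ∫ x, g x := integral_prod_mul q g
  have v2 : ∫ p : ℝ × ℝ, g p.1 * q p.2 = (∫ x, g x) * ∫ x, q x := integral_prod_mul g q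
  have v3 : ∫ p : ℝ × ℝ, g p.1 * g p.2 = (∫ x, g x) * ∫ x, g x := integral_prod_mul g g
  have vg : ∫ x, g x = √(π / b) := integral_gaussian b
  have vq : ∫ x, q x = √(π / b) / (2 * b) := aux_moment hb
  have hs : √(π / b) * √(π / b) = π / b := Real.mul_self_sqrt (by positivity)
  have i12 : Integrable (fun p : ℝ × ℝ => q p.1 * g p.2 + g p.1 * q p.2) := i1.add i2
  rw [e, integral_const_mul, integral_sub i12 (i3.const_mul _), integral_add i1 i2,
    integral_const_mul, v1, v2, v3, vg, vq]
  have : √(π / b) / (2 * b) * √(π / b) + √(π / b) * (√(π / b) / (2 * b))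
      - h / 2 * (√(π / b) * √(π / b)) = π / b / b - h / 2 * (π / b) := by
    linear_combination (1 / b - h / 2) * hs
  rw [this, hbdef]
  have := Real.pi_pos
  field_simp
  ring

/-- The explicit value of the Gaussian integral witnessing the non-positivity of the
Weyl quantization of the positive symbol `(u,v) ↦ e^{−νa²(u²+v²)}`, and its strict
negativity for `ν > 1/(h a²)`. -/
theorem nonpositivity_integral (h : ℝ) (hh : 0 < h) (a ν : ℝ) (ha : 0 < a) (hν : 0 < ν) :
    (∫ p : ℝ × ℝ, Real.exp (-ν * a ^ 2 * (p.1 ^ 2 + p.2 ^ 2)) * a ^ 2 *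
        (p.1 ^ 2 + p.2 ^ 2 - h / 2) * Real.exp (-(p.1 ^ 2 + p.2 ^ 2) / h) * (π * h)⁻¹) =
      (h * a ^ 2 / 2) * (1 - h * ν * a ^ 2) / (1 + h * ν * a ^ 2) ^ 2 ∧
    (1 / (h * a ^ 2) < ν →
      (∫ p : ℝ × ℝ, Real.exp (-ν * a ^ 2 * (p.1 ^ 2 + p.2 ^ 2)) * a ^ 2 *
        (p.1 ^ 2 + p.2 ^ 2 - h / 2) * Real.exp (-(p.1 ^ 2 + p.2 ^ 2) / h) * (π * h)⁻¹) < 0) := by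
  refine ⟨aux_val h hh a ν ha hν, fun hlt => ?_⟩
  rw [aux_val h hh a ν ha hν]
  rw [div_lt_iff₀ (by positivity)] at hlt
  apply div_neg_of_neg_of_pos
  · apply mul_neg_of_pos_of_neg (by positivity)
    linarith
  · positivity
end

section
/- Fix h > 0. Let u, v : ℝ → ℂ be functions such that γ_{ℝ,h/2}u and γ_{ℝ,h/2}v are rapidly decreasing (Schwartz). Then for all real x, ξ: e^{−(x²+ξ²)/h}·W_{h,ℝ}(u,v)(x,ξ) = (1/2)·W(γ_{ℝ,h/2}u, γ_{ℝ,h/2}v)(x, ξ/(2πh)). -/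
open Real MeasureTheory

/-- The classical Wigner function `W(u,v)(x,ξ) = ∫ e^{−2iπzξ} u(x+z/2) conj(v(x−z/2)) dz`. -/
noncomputable def wignerCl (u v : ℝ → ℂ) (x ξ : ℝ) : ℂ :=
  ∫ z : ℝ, Complex.exp (-2 * Complex.I * (π : ℂ) * (z : ℂ) * (ξ : ℂ)) * u (x + z / 2) *
    (starRingEnd ℂ) (v (x - z / 2))

/-- The map `γ_{ℝ,h/2}`: `(γ_{ℝ,h/2} f)(y) = (πh)^{−1/4} e^{−y²/(2h)} f(y)`. -/
noncomputable def gammaMap (h : ℝ) (f : ℝ → ℂ) : ℝ → ℂ := fun y =>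
  (((π * h) ^ (-(1 : ℝ) / 4) * Real.exp (-y ^ 2 / (2 * h)) : ℝ) : ℂ) * f y

/-- Relation between the Gaussian Wigner function and the classical one. -/
theorem gaussian_vs_classical_wigner (h : ℝ) (hh : 0 < h) (u v : ℝ → ℂ)
    (hu : ∃ φ : SchwartzMap ℝ ℂ, ∀ y, gammaMap h u y = φ y)
    (hv : ∃ φ : SchwartzMap ℝ ℂ, ∀ y, gammaMap h v y = φ y)
    (x ξ : ℝ) :
    (Real.exp (-(x ^ 2 + ξ ^ 2) / h) : ℂ) * wigner1 h u v x ξ =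
      (1 / 2 : ℂ) * wignerCl (gammaMap h u) (gammaMap h v) x (ξ / (2 * π * h)) := by
  have key : wignerCl (gammaMap h u) (gammaMap h v) x (ξ / (2 * π * h)) =
      2 * ∫ t : ℝ, (Real.exp (-x ^ 2 / h) : ℂ) *
        (Complex.exp (-2 * Complex.I * (ξ : ℂ) * (t : ℂ) / (h : ℂ)) * u (x + t) *
        (starRingEnd ℂ) (v (x - t)) * (Real.exp (-t ^ 2 / h) : ℂ) *
        (((π * h) ^ (-(1 : ℝ) / 2) : ℝ) : ℂ)) := by
    have hs := Measure.integral_comp_div (fun t : ℝ => (Real.exp (-x ^ 2 / h) : ℂ) *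
        (Complex.exp (-2 * Complex.I * (ξ : ℂ) * (t : ℂ) / (h : ℂ)) * u (x + t) *
        (starRingEnd ℂ) (v (x - t)) * (Real.exp (-t ^ 2 / h) : ℂ) *
        (((π * h) ^ (-(1 : ℝ) / 2) : ℝ) : ℂ))) (2 : ℝ)
    rw [abs_of_pos (by norm_num : (0 : ℝ) < 2), Complex.real_smul] at hs
    rw [show ((2 : ℝ) : ℂ) = 2 by norm_num] at hs
    rw [← hs]
    unfold wignerCl gammaMap
    congr 1
    funext z
    have hpi : (π : ℂ) ≠ 0 := by exact_mod_cast Real.pi_ne_zero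
    have hhc : (h : ℂ) ≠ 0 := by exact_mod_cast hh.ne'
    have e1 : (-2 * Complex.I * (π : ℂ) * (z : ℂ) * ((ξ / (2 * π * h) : ℝ) : ℂ)) =
        -2 * Complex.I * (ξ : ℂ) * ((z / 2 : ℝ) : ℂ) / (h : ℂ) := by
      push_cast
      field_simp
    have e2 : ((π * h) ^ (-(1 : ℝ) / 4) * Real.exp (-(x + z / 2) ^ 2 / (2 * h))) *
        ((π * h) ^ (-(1 : ℝ) / 4) * Real.exp (-(x - z / 2) ^ 2 / (2 * h))) =
        Real.exp (-x ^ 2 / h) * Real.exp (-(z / 2) ^ 2 / h) * (π * h) ^ (-(1 : ℝ) / 2) := by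
      have hp : (π * h) ^ (-(1 : ℝ) / 2) =
          (π * h) ^ (-(1 : ℝ) / 4) * (π * h) ^ (-(1 : ℝ) / 4) := by
        rw [← Real.rpow_add (by positivity)]
        norm_num
      have he : Real.exp (-x ^ 2 / h) * Real.exp (-(z / 2) ^ 2 / h) =
          Real.exp (-(x + z / 2) ^ 2 / (2 * h)) * Real.exp (-(x - z / 2) ^ 2 / (2 * h)) := by
        rw [← Real.exp_add, ← Real.exp_add]
        congr 1
        field_simp
        ring
      rw [hp, he]
      ring
    have e3 := congrArg (fun r : ℝ => (r : ℂ)) e2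
    simp only [Complex.ofReal_mul] at e3
    rw [e1, map_mul, Complex.conj_ofReal]
    simp only [Complex.ofReal_mul]
    linear_combination (Complex.exp (-2 * Complex.I * (ξ : ℂ) * ((z / 2 : ℝ) : ℂ) / (h : ℂ)) *
      u (x + z / 2) * (starRingEnd ℂ) (v (x - z / 2))) * e3
  have h1 : (Real.exp (-(x ^ 2 + ξ ^ 2) / h) : ℂ) * (Real.exp (ξ ^ 2 / h) : ℂ) =
      (Real.exp (-x ^ 2 / h) : ℂ) := by
    rw [← Complex.ofReal_mul, ← Real.exp_add]
    congr 2
    ring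
  rw [key, integral_const_mul]
  unfold wigner1
  rw [← mul_assoc, h1]
  ring
end

section
/- Fix h > 0 and d ≥ 1. Let F̈ : ℝ^{2d} → ℝ be a C^∞ function which, together with all its partial derivatives, is at most polynomially increasing. Let α, β ∈ ℕ^d with α ≠ β, and define I_{α,β}(F̈) = ∫_{ℝ^{2d}} F̈(x,ξ)·Π_{l=1}^d W_{h,ℝ}(ψ_{α_l},ψ_{β_l})(x_l,ξ_l) dμ_{ℝ^{2d},h/2}(x,ξ). Then for every index j ≤ d with α_j ≠ β_j and every differentiation order n ∈ ℕ*: I_{α,β}(F̈) = (i^n/(β_j − α_j)^n)·∫_{ℝ^{2d}} ((x_j∂_{ξ_j} − ξ_j∂_{x_j})^n F̈)(x,ξ)·Π_{l=1}^d W_{h,ℝ}(ψ_{α_l},ψ_{β_l})(x_l,ξ_l) dμ_{ℝ^{2d},h/2}(x,ξ). In particular, if (x_j∂_{ξ_j} − ξ_j∂_{x_j})F̈ vanishes identically for all j ≤ d, then I_{α,β}(F̈) = 0 whenever α ≠ β. -/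
open Real MeasureTheory

/-- The Gaussian measure `μ_{ℝ^{2d},s}` of variance `s` on `ℝ^d × ℝ^d`. -/
noncomputable def gaussMeasure2d (d : ℕ) (s : ℝ) : Measure ((Fin d → ℝ) × (Fin d → ℝ)) :=
  volume.withDensity fun p =>
    ENNReal.ofReal ((2 * π * s) ^ (-(d : ℝ)) *
      Real.exp (-((∑ i, p.1 i ^ 2) + ∑ i, p.2 i ^ 2) / (2 * s)))

/-- The differential operator `x_j∂_{ξ_j} − ξ_j∂_{x_j}` on functions on `ℝ^d × ℝ^d`. -/
noncomputable def rotOpD (d : ℕ) (j : Fin d) (F : (Fin d → ℝ) × (Fin d → ℝ) → ℝ) :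
    (Fin d → ℝ) × (Fin d → ℝ) → ℝ := fun p =>
  p.1 j * fderiv ℝ F p (0, Pi.single j 1) - p.2 j * fderiv ℝ F p (Pi.single j 1, 0)

open Function in
/-- Integrability of a temperate function times a Gaussian-bounded one. -/
lemma integrable_temperate_mul_gauss {E : Type*} [NormedAddCommGroup E] [NormedSpace ℝ E]
    [FiniteDimensional ℝ E] [MeasurableSpace E] [BorelSpace E] (μ : Measure E)
    [μ.IsAddHaarMeasure] {c : ℝ} (hc : 0 < c) {u ρ : E → ℂ} (hu : u.HasTemperateGrowth)
    (hρ : Continuous ρ) {K : ℝ} (hb : ∀ p, ‖ρ p‖ ≤ K * Real.exp (-c * ‖p‖ ^ 2)) :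
    Integrable (fun p => u p * ρ p) μ := by
  obtain ⟨k, C, hC⟩ := hu.2 0
  simp only [norm_iteratedFDeriv_zero] at hC
  set r : ℕ := Module.finrank ℝ E + 1 with hr
  have hint : Integrable (fun x : E ↦ (1 + ‖x‖) ^ (-(r : ℝ))) μ :=
    integrable_one_add_norm (by rw [hr]; push_cast; linarith)
  -- boundedness of (1+t)^(k+r) exp(-c t^2)
  obtain ⟨M, hM⟩ : ∃ M : ℝ, ∀ t : ℝ, 0 ≤ t → (1 + t) ^ (k + r) * Real.exp (-c * t ^ 2) ≤ M := by
    have h1 : ∀ t : ℝ, 0 ≤ t → (1 + t) ^ (k + r) ≤ (k + r).factorial * Real.exp (1 + t) := by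
      intro t ht
      have := Real.pow_div_factorial_le_exp (1 + t) (by linarith) (k + r)
      rw [div_le_iff₀ (by positivity)] at this
      linarith
    refine ⟨(k + r).factorial * Real.exp (1 + 1 / (4 * c)), fun t ht => ?_⟩
    calc _ ≤ (k + r).factorial * Real.exp (1 + t) * Real.exp (-c * t ^ 2) := by
          gcongr; exact h1 t ht
      _ = (k + r).factorial * Real.exp (1 + t + -c * t ^ 2) := by
          rw [mul_assoc, ← Real.exp_add]
      _ ≤ _ := by
          refine mul_le_mul_of_nonneg_left (Real.exp_le_exp.2 ?_) (by positivity)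
          have : 0 ≤ (2 * c * t - 1) ^ 2 / (4 * c) := by positivity
          have h2 : (2 * c * t - 1) ^ 2 / (4 * c) = c * t ^ 2 - t + 1 / (4 * c) := by
            field_simp; ring
          linarith
  refine (hint.const_mul (|C| * |K| * M)).mono' ?_ (Filter.Eventually.of_forall fun p => ?_)
  · exact (hu.1.continuous.mul hρ).aestronglyMeasurable
  · rw [norm_mul]
    have hp := norm_nonneg p
    have hpos : 0 < 1 + ‖p‖ := by positivity
    have e1 : ‖u p‖ ≤ |C| * (1 + ‖p‖) ^ k :=
      (hC p).trans (by gcongr; exact le_abs_self C)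
    have e2 : ‖ρ p‖ ≤ |K| * Real.exp (-c * ‖p‖ ^ 2) :=
      (hb p).trans (by gcongr; exact le_abs_self K)
    calc ‖u p‖ * ‖ρ p‖ ≤ (|C| * (1 + ‖p‖) ^ k) * (|K| * Real.exp (-c * ‖p‖ ^ 2)) := by gcongr
      _ = |C| * |K| * ((1 + ‖p‖) ^ (k + r) * Real.exp (-c * ‖p‖ ^ 2)) *
            (1 + ‖p‖) ^ (-(r : ℝ)) := by
          rw [Real.rpow_neg hpos.le, Real.rpow_natCast, pow_add]
          field_simp
      _ ≤ _ := by
          gcongr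
          exact hM _ hp

/-- Unnormalized Hermite functions. -/
noncomputable def hp (h : ℝ) : ℕ → ℝ → ℝ
  | 0 => fun _ => 1
  | 1 => fun x => 2 / h * x
  | (j + 2) => fun x => 2 / h * x * hp h (j + 1) x - 2 * (j + 1) / h * hp h j x

lemma hp_succ (h : ℝ) (j : ℕ) (x : ℝ) :
    hp h (j + 1) x = 2 / h * x * hp h j x - 2 * j / h * hp h (j - 1) x := by
  cases j with
  | zero => simp [hp]
  | succ j => simp [hp]

lemma hp_deriv (h : ℝ) : ∀ (j : ℕ) (x : ℝ),
    HasDerivAt (hp h j) (2 * j / h * hp h (j - 1) x) x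
  | 0, x => by simpa [hp] using hasDerivAt_const x (1 : ℝ)
  | 1, x => by
      have := (hasDerivAt_id x).const_mul (2 / h)
      simpa [hp] using this
  | j + 2, x => by
      have h1 := (((hasDerivAt_id x).const_mul (2 / h)).mul (hp_deriv h (j + 1) x)).sub
        ((hp_deriv h j x).const_mul (2 * ((j : ℝ) + 1) / h))
      convert! h1 using 1
      simp only [Nat.add_sub_cancel, show j + 2 - 1 = j + 1 from rfl, id]
      rw [hp_succ]
      push_cast
      ring

lemma hp_temperate (h : ℝ) : ∀ (j : ℕ), (hp h j).HasTemperateGrowth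
  | 0 => by unfold hp; fun_prop
  | 1 => by unfold hp; fun_prop
  | j + 2 => by
      have h1 := hp_temperate h j
      have h2 := hp_temperate h (j + 1)
      unfold hp; fun_prop

lemma hp_iteratedDeriv (h : ℝ) (j : ℕ) :
    iteratedDeriv j (fun t => Real.exp (-t ^ 2 / h)) =
      fun x => (-1) ^ j * hp h j x * Real.exp (-x ^ 2 / h) := by
  induction j with
  | zero => ext x; simp [hp]
  | succ j ih =>
    rw [iteratedDeriv_succ, ih]
    ext x
    have h0 : HasDerivAt (fun t : ℝ => Real.exp (-t ^ 2 / h))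
        (Real.exp (-x ^ 2 / h) * (-(2 * x) / h)) x := by
      have : HasDerivAt (fun t : ℝ => -t ^ 2 / h) (-(2 * x) / h) x := by
        have := ((hasDerivAt_pow 2 x).neg).div_const h
        simpa using! this
      exact this.exp
    have h1 := ((hp_deriv h j x).const_mul ((-1 : ℝ) ^ j)).mul h0
    refine (HasDerivAt.deriv h1).trans ?_
    rw [hp_succ, pow_succ]
    ring

lemma psi_eq_s14 (h : ℝ) (j : ℕ) : ∃ c : ℝ, ∀ x, psi h j x = c * hp h j x := by
  refine ⟨((-1 : ℝ) ^ j / Real.sqrt (Nat.factorial j)) * (h / 2) ^ ((j : ℝ) / 2) * (-1) ^ j,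
    fun x => ?_⟩
  unfold psi
  rw [hp_iteratedDeriv]
  have : Real.exp (x ^ 2 / h) * Real.exp (-x ^ 2 / h) = 1 := by
    rw [← Real.exp_add]; rw [neg_div, add_neg_cancel, Real.exp_zero]
  linear_combination ((-1 : ℝ) ^ j / Real.sqrt (Nat.factorial j)) * (h / 2) ^ ((j : ℝ) / 2) *
    (-1) ^ j * hp h j x * this

/-- The oscillating Gaussian kernel of the Wigner transform. -/
noncomputable def wk (h ζ t : ℝ) : ℂ :=
  Complex.exp (-2 * Complex.I * (ζ : ℂ) * (t : ℂ) / (h : ℂ)) * (Real.exp (-t ^ 2 / h) : ℂ)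

lemma wk_cont (h ζ : ℝ) : Continuous (wk h ζ) := by
  unfold wk; fun_prop

lemma wk_norm (h ζ t : ℝ) : ‖wk h ζ t‖ ≤ 1 * Real.exp (-(1 / h) * ‖t‖ ^ 2) := by
  unfold wk
  have : (-2 * Complex.I * (ζ : ℂ) * (t : ℂ) / (h : ℂ)) = ((-2 * ζ * t / h : ℝ) : ℂ) * Complex.I := by
    push_cast; ring
  rw [norm_mul, this, Complex.norm_exp_ofReal_mul_I, Complex.norm_real, Real.norm_eq_abs,
    Real.abs_exp, Real.norm_eq_abs, sq_abs]
  apply le_of_eq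
  congr 2
  ring

lemma wk_deriv (h ζ t : ℝ) :
    HasDerivAt (wk h ζ) (-(2 / h : ℝ) * (t + Complex.I * ζ) * wk h ζ t) t := by
  have e : wk h ζ = fun t : ℝ => Complex.exp (-2 * Complex.I * (ζ : ℂ) * (t : ℂ) / (h : ℂ)
      + -(t : ℂ) ^ 2 / h) := by
    ext t
    simp [wk, Complex.exp_add]
  rw [e]
  have h1 : HasDerivAt (fun t : ℝ => (t : ℂ)) 1 t := Complex.ofRealCLM.hasDerivAt
  have h2 := (((h1.const_mul (-2 * Complex.I * (ζ : ℂ))).div_const (h : ℂ)).add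
    (((h1.pow 2).neg).div_const (h : ℂ))).cexp
  convert! h2 using 1
  simp only [Pi.neg_apply, Pi.pow_apply, Pi.add_apply]
  push_cast
  ring

lemma wk_int {h : ℝ} (hh : 0 < h) (ζ : ℝ) {u : ℝ → ℂ} (hu : u.HasTemperateGrowth) :
    Integrable (fun t => u t * wk h ζ t) :=
  integrable_temperate_mul_gauss volume (c := 1 / h) (by positivity) hu (wk_cont h ζ) (wk_norm h ζ)

lemma wk_stein {h : ℝ} (hh : 0 < h) (ζ : ℝ) {u u' : ℝ → ℂ} (hu : u.HasTemperateGrowth)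
    (hu' : u'.HasTemperateGrowth) (hd : ∀ t, HasDerivAt u (u' t) t) :
    ∫ t : ℝ, ((2 / h : ℝ) * (t + Complex.I * ζ) * u t) * wk h ζ t = ∫ t, u' t * wk h ζ t := by
  have ht : Function.HasTemperateGrowth
      (fun t : ℝ => ((2 / h : ℝ) * ((t : ℂ) + Complex.I * ζ) * u t : ℂ)) := by
    fun_prop
  have h1 := integral_mul_deriv_eq_deriv_mul_of_integrable (u := u) (v := wk h ζ)
    (u' := u') (v' := fun t => -(2 / h : ℝ) * (t + Complex.I * ζ) * wk h ζ t)
    (fun t _ => hd t) (fun t _ => wk_deriv h ζ t) ?_ (wk_int hh ζ hu') (wk_int hh ζ hu)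
  · rw [← neg_eq_iff_eq_neg] at h1
    rw [← h1, ← integral_neg]
    congr 1; ext t; push_cast; ring
  · convert! (wk_int hh ζ ht).neg using 1
    ext t; simp; ring

/-- Unnormalized Wigner integrals. -/
noncomputable def TT (h : ℝ) (a b : ℕ) (z ζ : ℝ) : ℂ :=
  ∫ t : ℝ, ((hp h a (z + t) : ℂ) * (hp h b (z - t) : ℂ)) * wk h ζ t

lemma hp_shift1 (h : ℝ) (a : ℕ) (z : ℝ) :
    Function.HasTemperateGrowth (fun t : ℝ => (hp h a (z + t) : ℂ)) := by
  have : Function.HasTemperateGrowth (fun t : ℝ => z + t) := by fun_prop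
  exact (Function.Complex.hasTemperateGrowth_ofReal.comp (hp_temperate h a)).comp this

lemma hp_shift2 (h : ℝ) (a : ℕ) (z : ℝ) :
    Function.HasTemperateGrowth (fun t : ℝ => (hp h a (z - t) : ℂ)) := by
  have : Function.HasTemperateGrowth (fun t : ℝ => z - t) := by fun_prop
  exact (Function.Complex.hasTemperateGrowth_ofReal.comp (hp_temperate h a)).comp this

lemma TT_stein {h : ℝ} (hh : 0 < h) (a b : ℕ) (z ζ : ℝ) :
    ∫ t : ℝ, ((2 / h : ℝ) * (t + Complex.I * ζ) *
      ((hp h a (z + t) : ℂ) * (hp h b (z - t) : ℂ))) * wk h ζ t =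
    (2 * a / h : ℝ) * TT h (a - 1) b z ζ - (2 * b / h : ℝ) * TT h a (b - 1) z ζ := by
  have i1 := hp_shift1 h a z
  have i2 := hp_shift2 h b z
  have i3 := hp_shift1 h (a - 1) z
  have i4 := hp_shift2 h (b - 1) z
  rw [wk_stein hh ζ (u' := fun t => (2 * a / h : ℝ) * ((hp h (a - 1) (z + t) : ℂ) *
    (hp h b (z - t) : ℂ)) - (2 * b / h : ℝ) * ((hp h a (z + t) : ℂ) *
    (hp h (b - 1) (z - t) : ℂ)))]
  · unfold TT
    rw [← integral_const_mul, ← integral_const_mul, ← integral_sub]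
    · congr 1; ext t; ring
    · exact (wk_int hh ζ (i3.fun_mul i2)).const_mul _
    · exact (wk_int hh ζ (i1.fun_mul i4)).const_mul _
  · fun_prop
  · fun_prop
  · intro t
    have d1 : HasDerivAt (fun t : ℝ => hp h a (z + t)) (2 * a / h * hp h (a - 1) (z + t)) t := by
      simpa using (hp_deriv h a (z + t)).comp_const_add z t
    have d2 : HasDerivAt (fun t : ℝ => hp h b (z - t)) (-(2 * b / h * hp h (b - 1) (z - t))) t :=
      (hp_deriv h b (z - t)).comp_const_sub z t
    have := d1.ofReal_comp.mul d2.ofReal_comp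
    convert! this using 1
    push_cast
    ring

lemma TT_succ_left {h : ℝ} (hh : 0 < h) (a b : ℕ) (z ζ : ℝ) :
    TT h (a + 1) b z ζ = (2 / h : ℝ) * (z - Complex.I * ζ) * TT h a b z ζ
      - (2 * b / h : ℝ) * TT h a (b - 1) z ζ := by
  have hs := TT_stein hh a b z ζ
  have i1 := hp_shift1 h a z
  have i2 := hp_shift2 h b z
  have i3 := hp_shift1 h (a - 1) z
  have key : TT h (a + 1) b z ζ = (2 / h : ℝ) * (z - Complex.I * ζ) * TT h a b z ζ +
      (∫ t : ℝ, ((2 / h : ℝ) * (t + Complex.I * ζ) *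
      ((hp h a (z + t) : ℂ) * (hp h b (z - t) : ℂ))) * wk h ζ t) -
      (2 * a / h : ℝ) * TT h (a - 1) b z ζ := by
    unfold TT
    rw [← integral_const_mul, ← integral_const_mul, ← integral_add, ← integral_sub]
    · congr 1; ext t; rw [hp_succ]; push_cast; ring
    · exact ((wk_int hh ζ (i1.fun_mul i2)).const_mul _).add (wk_int hh ζ (by fun_prop))
    · exact (wk_int hh ζ (i3.fun_mul i2)).const_mul _
    · exact (wk_int hh ζ (i1.fun_mul i2)).const_mul _
    · exact wk_int hh ζ (by fun_prop)
  rw [key, hs]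
  ring

lemma TT_succ_right {h : ℝ} (hh : 0 < h) (a b : ℕ) (z ζ : ℝ) :
    TT h a (b + 1) z ζ = (2 / h : ℝ) * (z + Complex.I * ζ) * TT h a b z ζ
      - (2 * a / h : ℝ) * TT h (a - 1) b z ζ := by
  have hs := TT_stein hh a b z ζ
  have i1 := hp_shift1 h a z
  have i2 := hp_shift2 h b z
  have i3 := hp_shift2 h (b - 1) z
  have key : TT h a (b + 1) z ζ = (2 / h : ℝ) * (z + Complex.I * ζ) * TT h a b z ζ -
      (∫ t : ℝ, ((2 / h : ℝ) * (t + Complex.I * ζ) *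
      ((hp h a (z + t) : ℂ) * (hp h b (z - t) : ℂ))) * wk h ζ t) -
      (2 * b / h : ℝ) * TT h a (b - 1) z ζ := by
    unfold TT
    rw [← integral_const_mul, ← integral_const_mul, ← integral_sub, ← integral_sub]
    · congr 1; ext t; rw [hp_succ]; push_cast; ring
    · exact ((wk_int hh ζ (i1.fun_mul i2)).const_mul _).sub (wk_int hh ζ (by fun_prop))
    · exact (wk_int hh ζ (i1.fun_mul i3)).const_mul _
    · exact (wk_int hh ζ (i1.fun_mul i2)).const_mul _
    · exact wk_int hh ζ (by fun_prop)
  rw [key, hs]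
  ring

lemma TT_zero {h : ℝ} (hh : 0 < h) (z ζ : ℝ) :
    TT h 0 0 z ζ = ((π * h) ^ ((1 : ℝ) / 2) : ℝ) * (Real.exp (-ζ ^ 2 / h) : ℂ) := by
  have h0 : (h : ℂ) ≠ 0 := by exact_mod_cast hh.ne'
  have := fourierIntegral_gaussian (b := (1 / h : ℝ)) (by simpa using hh) (-2 * ζ / h)
  have e : TT h 0 0 z ζ = ∫ x : ℝ, Complex.exp (Complex.I * (-2 * ζ / h) * x) *
      Complex.exp (-((1 / h : ℝ) : ℂ) * x ^ 2) := by
    unfold TT wk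
    congr 1; ext t
    simp only [hp]
    push_cast
    rw [one_mul, one_mul]
    congr 2 <;> ring
  rw [e, this]
  rw [Complex.ofReal_cpow (by positivity)]
  push_cast
  congr 2
  · field_simp
  · field_simp; ring

/-- The polynomial form of the Wigner functions of Hermite functions. -/
noncomputable def AA (h : ℝ) : ℕ → ℕ → ℂ → ℂ → ℂ
  | 0, b, _, v => ((2 / h : ℝ) * v) ^ b
  | a + 1, b, w, v => (2 / h : ℝ) * w * AA h a b w v - (2 * b / h : ℝ) * AA h a (b - 1) w v

lemma TT_eq {h : ℝ} (hh : 0 < h) (z ζ : ℝ) (a : ℕ) : ∀ b,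
    TT h a b z ζ = AA h a b (z - Complex.I * ζ) (z + Complex.I * ζ) * TT h 0 0 z ζ := by
  induction a with
  | zero =>
    intro b
    induction b with
    | zero => simp [AA]
    | succ b ih =>
      rw [TT_succ_right hh, ih]
      simp only [AA, pow_succ]
      push_cast
      ring
  | succ a ih =>
    intro b
    rw [TT_succ_left hh, ih, ih]
    simp only [AA]
    ring

lemma wigner1_eq {h : ℝ} (hh : 0 < h) (a b : ℕ) : ∃ c : ℂ, ∀ z ζ : ℝ,
    wigner1 h (fun t => (psi h a t : ℂ)) (fun t => (psi h b t : ℂ)) z ζ =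
      c * AA h a b (z - Complex.I * ζ) (z + Complex.I * ζ) := by
  obtain ⟨c, hc⟩ := psi_eq_s14 h a
  obtain ⟨c', hc'⟩ := psi_eq_s14 h b
  refine ⟨c * c', fun z ζ => ?_⟩
  have e : (∫ t : ℝ, Complex.exp (-2 * Complex.I * (ζ : ℂ) * (t : ℂ) / (h : ℂ)) *
      (psi h a (z + t) : ℂ) *
      (starRingEnd ℂ) (psi h b (z - t) : ℂ) * (Real.exp (-t ^ 2 / h) : ℂ) *
        (((π * h) ^ (-(1 : ℝ) / 2) : ℝ) : ℂ)) =
      c * c' * (((π * h) ^ (-(1 : ℝ) / 2) : ℝ) : ℂ) * TT h a b z ζ := by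
    unfold TT wk
    rw [← integral_const_mul]
    congr 1; ext t
    rw [Complex.conj_ofReal, hc, hc']
    push_cast; ring
  unfold wigner1
  rw [e, TT_eq hh, TT_zero hh]
  have e1 : (((π * h) ^ (-(1 : ℝ) / 2) : ℝ) : ℂ) * (((π * h) ^ ((1 : ℝ) / 2) : ℝ) : ℂ) = 1 := by
    rw [← Complex.ofReal_mul, ← Real.rpow_add (by positivity)]
    norm_num
  have e2 : (Real.exp (ζ ^ 2 / h) : ℂ) * (Real.exp (-ζ ^ 2 / h) : ℂ) = 1 := by
    rw [← Complex.ofReal_mul, ← Real.exp_add, neg_div, add_neg_cancel, Real.exp_zero]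
    simp
  linear_combination (c * c' * AA h a b (z - Complex.I * ζ) (z + Complex.I * ζ)) *
    ((((π * h) ^ (-(1 : ℝ) / 2) : ℝ) : ℂ) * (((π * h) ^ ((1 : ℝ) / 2) : ℝ) : ℂ) * e2 + e1)

lemma temperate_fderiv {E F : Type*} [NormedAddCommGroup E] [NormedSpace ℝ E]
    [NormedAddCommGroup F] [NormedSpace ℝ F] {u : E → F} (hu : u.HasTemperateGrowth) :
    (fderiv ℝ u).HasTemperateGrowth := by
  refine ⟨hu.1.fderiv_right (by simp), fun n => ?_⟩
  obtain ⟨k, C, hC⟩ := hu.2 (n + 1)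
  refine ⟨k, C, fun x => ?_⟩
  rw [norm_iteratedFDeriv_fderiv]
  exact hC x

lemma temperate_fderiv_apply {E F : Type*} [NormedAddCommGroup E] [NormedSpace ℝ E]
    [NormedAddCommGroup F] [NormedSpace ℝ F] {u : E → F} (hu : u.HasTemperateGrowth) (v : E) :
    Function.HasTemperateGrowth (fun p => fderiv ℝ u p v) :=
  (ContinuousLinearMap.apply ℝ F v).hasTemperateGrowth.comp (temperate_fderiv hu)

lemma temperate_fst {d : ℕ} (j : Fin d) :
    Function.HasTemperateGrowth (fun p : (Fin d → ℝ) × (Fin d → ℝ) => p.1 j) :=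
  ((ContinuousLinearMap.proj (R := ℝ) (φ := fun _ : Fin d => ℝ) j).comp
    (ContinuousLinearMap.fst ℝ (Fin d → ℝ) (Fin d → ℝ))).hasTemperateGrowth

lemma temperate_snd {d : ℕ} (j : Fin d) :
    Function.HasTemperateGrowth (fun p : (Fin d → ℝ) × (Fin d → ℝ) => p.2 j) :=
  ((ContinuousLinearMap.proj (R := ℝ) (φ := fun _ : Fin d => ℝ) j).comp
    (ContinuousLinearMap.snd ℝ (Fin d → ℝ) (Fin d → ℝ))).hasTemperateGrowth

lemma temperate_ofReal {E : Type*} [NormedAddCommGroup E] [NormedSpace ℝ E]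
    {u : E → ℝ} (hu : u.HasTemperateGrowth) :
    Function.HasTemperateGrowth (fun p => (u p : ℂ)) :=
  Function.Complex.hasTemperateGrowth_ofReal.comp hu

lemma rotOpD_temperate {d : ℕ} (j : Fin d) {F : (Fin d → ℝ) × (Fin d → ℝ) → ℝ}
    (hF : F.HasTemperateGrowth) : (rotOpD d j F).HasTemperateGrowth := by
  unfold rotOpD
  exact ((temperate_fst j).fun_mul (temperate_fderiv_apply hF _)).fun_sub
    ((temperate_snd j).fun_mul (temperate_fderiv_apply hF _))

/-- Complex version of the rotation operator. -/
noncomputable def rotC {d : ℕ} (j : Fin d) (F : (Fin d → ℝ) × (Fin d → ℝ) → ℂ) :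
    (Fin d → ℝ) × (Fin d → ℝ) → ℂ := fun p =>
  p.1 j * fderiv ℝ F p (0, Pi.single j 1) - p.2 j * fderiv ℝ F p (Pi.single j 1, 0)

lemma rotC_ofReal {d : ℕ} (j : Fin d) {F : (Fin d → ℝ) × (Fin d → ℝ) → ℝ}
    (hF : Differentiable ℝ F) (p) : rotC j (fun p => (F p : ℂ)) p = (rotOpD d j F p : ℂ) := by
  have h1 : fderiv ℝ (fun p => (F p : ℂ)) p = Complex.ofRealCLM.comp (fderiv ℝ F p) :=
    (Complex.ofRealCLM.hasFDerivAt.comp p (hF p).hasFDerivAt).fderiv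
  simp [rotC, rotOpD, h1]

lemma rotC_mul {d : ℕ} (j : Fin d) {u v : (Fin d → ℝ) × (Fin d → ℝ) → ℂ} {p}
    (hu : DifferentiableAt ℝ u p) (hv : DifferentiableAt ℝ v p) :
    rotC j (fun q => u q * v q) p = rotC j u p * v p + u p * rotC j v p := by
  unfold rotC
  rw [fderiv_fun_mul hu hv]
  simp
  ring

lemma rotC_sub {d : ℕ} (j : Fin d) {u v : (Fin d → ℝ) × (Fin d → ℝ) → ℂ} {p}
    (hu : DifferentiableAt ℝ u p) (hv : DifferentiableAt ℝ v p) :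
    rotC j (fun q => u q - v q) p = rotC j u p - rotC j v p := by
  unfold rotC
  rw [fderiv_fun_sub hu hv]
  simp
  ring

/-- Temperate eigenfunctions of the rotation operator. -/
def IsEig {d : ℕ} (j : Fin d) (u : (Fin d → ℝ) × (Fin d → ℝ) → ℂ) (r : ℂ) : Prop :=
  u.HasTemperateGrowth ∧ ∀ p, rotC j u p = r * u p

lemma temperate_diff {E F : Type*} [NormedAddCommGroup E] [NormedSpace ℝ E]
    [NormedAddCommGroup F] [NormedSpace ℝ F] {u : E → F} (hu : u.HasTemperateGrowth) :
    Differentiable ℝ u := hu.1.differentiable (by simp)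

lemma IsEig.mul {d : ℕ} {j : Fin d} {u v : (Fin d → ℝ) × (Fin d → ℝ) → ℂ} {r s : ℂ}
    (hu : IsEig j u r) (hv : IsEig j v s) : IsEig j (fun p => u p * v p) (r + s) := by
  refine ⟨hu.1.fun_mul hv.1, fun p => ?_⟩
  rw [rotC_mul j (temperate_diff hu.1 p) (temperate_diff hv.1 p), hu.2, hv.2]
  ring

lemma IsEig.sub {d : ℕ} {j : Fin d} {u v : (Fin d → ℝ) × (Fin d → ℝ) → ℂ} {r : ℂ}
    (hu : IsEig j u r) (hv : IsEig j v r) : IsEig j (fun p => u p - v p) r := by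
  refine ⟨hu.1.fun_sub hv.1, fun p => ?_⟩
  rw [rotC_sub j (temperate_diff hu.1 p) (temperate_diff hv.1 p), hu.2, hv.2]
  ring

lemma IsEig.const {d : ℕ} (j : Fin d) (c : ℂ) : IsEig j (fun _ => c) 0 := by
  refine ⟨.const c, fun p => ?_⟩
  simp [rotC]

lemma IsEig.zero {d : ℕ} (j : Fin d) (r : ℂ) : IsEig j (fun _ => 0) r := by
  refine ⟨.const 0, fun p => ?_⟩
  simp [rotC]

lemma IsEig.const_mul {d : ℕ} {j : Fin d} {u : (Fin d → ℝ) × (Fin d → ℝ) → ℂ} {r : ℂ}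
    (c : ℂ) (hu : IsEig j u r) : IsEig j (fun p => c * u p) r := by
  simpa using (IsEig.const j c).mul hu

lemma IsEig.pow {d : ℕ} {j : Fin d} {u : (Fin d → ℝ) × (Fin d → ℝ) → ℂ} {r : ℂ}
    (hu : IsEig j u r) (n : ℕ) : IsEig j (fun p => u p ^ n) (n * r) := by
  induction n with
  | zero => simpa using IsEig.const j 1
  | succ n ih =>
    have := ih.mul hu
    simp only [pow_succ]
    convert! this using 1
    push_cast; ring

lemma IsEig.prod {d : ℕ} {j : Fin d} {ι : Type*} (s : Finset ι)
    (u : ι → (Fin d → ℝ) × (Fin d → ℝ) → ℂ) (r : ι → ℂ)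
    (hu : ∀ i ∈ s, IsEig j (u i) (r i)) : IsEig j (fun p => ∏ i ∈ s, u i p) (∑ i ∈ s, r i) := by
  classical
  induction s using Finset.induction_on with
  | empty => simpa using IsEig.const j 1
  | insert a s ha ih =>
    simp only [Finset.prod_insert ha, Finset.sum_insert ha]
    exact (hu a (by simp)).mul (ih fun i hi => hu i (by simp [hi]))

lemma isEig_lin {d : ℕ} (j l : Fin d) (c : ℂ) (hc : c ^ 2 = -1) :
    IsEig j (fun p => (p.1 l : ℂ) + c * p.2 l) (if l = j then c else 0) := by
  let L : ((Fin d → ℝ) × (Fin d → ℝ)) →L[ℝ] ℂ :=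
    Complex.ofRealCLM.comp ((ContinuousLinearMap.proj (R := ℝ) (φ := fun _ : Fin d => ℝ) l).comp
      (ContinuousLinearMap.fst ℝ (Fin d → ℝ) (Fin d → ℝ))) +
    c • Complex.ofRealCLM.comp
      ((ContinuousLinearMap.proj (R := ℝ) (φ := fun _ : Fin d => ℝ) l).comp
      (ContinuousLinearMap.snd ℝ (Fin d → ℝ) (Fin d → ℝ)))
  have hL : (fun p : (Fin d → ℝ) × (Fin d → ℝ) => (p.1 l : ℂ) + c * p.2 l) = L := by
    ext p; simp [L]
  rw [hL]
  refine ⟨L.hasTemperateGrowth, fun p => ?_⟩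
  unfold rotC
  rw [L.fderiv]
  by_cases hl : l = j
  · subst hl
    simp [L]
    linear_combination (-(p.2 l : ℂ)) * hc
  · simp [L, hl]

lemma isEig_AA {d : ℕ} (h : ℝ) (j l : Fin d) (a : ℕ) : ∀ b : ℕ,
    IsEig j (fun p => AA h a b (p.1 l - Complex.I * p.2 l) (p.1 l + Complex.I * p.2 l))
      (if l = j then Complex.I * (b - a) else 0) := by
  have hv := isEig_lin j l Complex.I (by simp)
  have hw := isEig_lin j l (-Complex.I) (by simp)
  induction a with
  | zero =>
    intro b
    have := (hv.const_mul (2 / h : ℝ)).pow b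
    simp only [AA]
    convert! this using 1
    split_ifs <;> simp [mul_comm]
  | succ a ih =>
    intro b
    have h1 := (hw.const_mul (2 / h : ℝ)).mul (ih b)
    have h2 : IsEig j (fun p => (2 * b / h : ℝ) *
        AA h a (b - 1) (p.1 l - Complex.I * p.2 l) (p.1 l + Complex.I * p.2 l))
        (if l = j then Complex.I * (b - (a + 1 : ℕ)) else 0) := by
      cases b with
      | zero => simpa using IsEig.zero j _
      | succ b =>
        have := (ih b).const_mul (2 * (b + 1 : ℕ) / h : ℝ)
        simp only [Nat.add_sub_cancel]
        convert! this using 1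
        split_ifs <;> push_cast <;> ring
    have h3 : IsEig j (fun p : (Fin d → ℝ) × (Fin d → ℝ) =>
        (2 / h : ℝ) * ((p.1 l : ℂ) - Complex.I * p.2 l) *
        AA h a b (p.1 l - Complex.I * p.2 l) (p.1 l + Complex.I * p.2 l))
        (if l = j then Complex.I * (b - (a + 1 : ℕ)) else 0) := by
      convert! h1 using 1
      · ext p; ring
      · split_ifs <;> push_cast <;> ring
    exact h3.sub h2

/-- The unnormalized Gaussian. -/
noncomputable def gd {d : ℕ} (h : ℝ) (p : (Fin d → ℝ) × (Fin d → ℝ)) : ℝ :=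
  Real.exp (-(1 / h) * ((∑ i, p.1 i ^ 2) + ∑ i, p.2 i ^ 2))

lemma gd_cont {d : ℕ} (h : ℝ) : Continuous (fun p : (Fin d → ℝ) × (Fin d → ℝ) => (gd h p : ℂ)) := by
  unfold gd; fun_prop

lemma gd_norm {d : ℕ} {h : ℝ} (hh : 0 < h) (p : (Fin d → ℝ) × (Fin d → ℝ)) :
    ‖(gd h p : ℂ)‖ ≤ 1 * Real.exp (-(1 / h) * ‖p‖ ^ 2) := by
  unfold gd
  rw [Complex.norm_real, Real.norm_eq_abs, Real.abs_exp, one_mul, neg_mul, neg_mul]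
  apply Real.exp_le_exp.2
  apply neg_le_neg
  refine mul_le_mul_of_nonneg_left ?_ (by positivity)
  have key : ∀ q : Fin d → ℝ, ‖q‖ ^ 2 ≤ ∑ i, q i ^ 2 := by
    intro q
    have : ‖q‖ ≤ Real.sqrt (∑ i, q i ^ 2) := by
      rw [pi_norm_le_iff_of_nonneg (Real.sqrt_nonneg _)]
      intro i
      apply Real.le_sqrt_of_sq_le
      rw [Real.norm_eq_abs, sq_abs]
      exact Finset.single_le_sum (f := fun i => q i ^ 2) (fun i _ => sq_nonneg _)
        (Finset.mem_univ i)
    calc ‖q‖ ^ 2 ≤ Real.sqrt (∑ i, q i ^ 2) ^ 2 := by gcongr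
      _ = _ := Real.sq_sqrt (Finset.sum_nonneg fun i _ => sq_nonneg _)
  have h1 := key p.1
  have h2 := key p.2
  have n1 : 0 ≤ ∑ i, p.1 i ^ 2 := Finset.sum_nonneg fun i _ => sq_nonneg _
  have n2 : 0 ≤ ∑ i, p.2 i ^ 2 := Finset.sum_nonneg fun i _ => sq_nonneg _
  rw [Prod.norm_def]
  rcases max_choice ‖p.1‖ ‖p.2‖ with e | e <;> rw [e] <;> linarith

instance volHaar (d : ℕ) :
    (volume : Measure ((Fin d → ℝ) × (Fin d → ℝ))).IsAddHaarMeasure :=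
  Measure.prod.instIsAddHaarMeasure _ _

lemma gd_int {d : ℕ} {h : ℝ} (hh : 0 < h) {u : (Fin d → ℝ) × (Fin d → ℝ) → ℂ}
    (hu : u.HasTemperateGrowth) : Integrable (fun p => u p * (gd h p : ℂ)) :=
  integrable_temperate_mul_gauss volume (c := 1 / h) (by positivity) hu (gd_cont h) (gd_norm hh)

lemma gd_diff {d : ℕ} (h : ℝ) :
    Differentiable ℝ (fun p : (Fin d → ℝ) × (Fin d → ℝ) => (gd h p : ℂ)) := by
  have : Differentiable ℝ (fun p : (Fin d → ℝ) × (Fin d → ℝ) => gd h p) := by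
    unfold gd; fun_prop
  exact Complex.ofRealCLM.differentiable.comp this

lemma gd_fderiv {d : ℕ} (h : ℝ) (p v : (Fin d → ℝ) × (Fin d → ℝ)) :
    fderiv ℝ (fun p : (Fin d → ℝ) × (Fin d → ℝ) => (gd h p : ℂ)) p v =
      -(2 / h : ℝ) * ((∑ i, p.1 i * v.1 i + ∑ i, p.2 i * v.2 i : ℝ) : ℂ) * gd h p := by
  rw [← ((gd_diff h) p).lineDeriv_eq_fderiv]
  apply HasLineDerivAt.lineDeriv
  unfold HasLineDerivAt
  have h1 : ∀ (x w : ℝ), HasDerivAt (fun t : ℝ => (x + t * w) ^ 2) (2 * (x * w)) 0 := by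
    intro x w
    have := (((hasDerivAt_id (0 : ℝ)).mul_const w).const_add x).pow 2
    convert! this using 1
    simp
    ring
  have h2 : ∀ q w : Fin d → ℝ, HasDerivAt (fun t : ℝ => ∑ i, (q i + t * w i) ^ 2)
      (∑ i, 2 * (q i * w i)) 0 := by
    intro q w
    exact HasDerivAt.fun_sum fun i _ => h1 (q i) (w i)
  have h3 := ((((h2 p.1 v.1).add (h2 p.2 v.2)).const_mul (-(1 / h))).exp).ofReal_comp
  convert! h3 using 1
  simp only [Pi.add_apply, zero_mul, add_zero, gd, ← Finset.mul_sum]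
  push_cast
  ring

lemma gd_stein {d : ℕ} {h : ℝ} (hh : 0 < h) {f : (Fin d → ℝ) × (Fin d → ℝ) → ℂ}
    (hf : f.HasTemperateGrowth) (v : (Fin d → ℝ) × (Fin d → ℝ)) :
    ∫ p, fderiv ℝ f p v * (gd h p : ℂ) =
      ∫ p, (((2 / h : ℝ) * ((∑ i, p.1 i * v.1 i + ∑ i, p.2 i * v.2 i : ℝ) : ℂ)) * f p) *
        (gd h p : ℂ) := by
  have ht : Function.HasTemperateGrowth (fun p : (Fin d → ℝ) × (Fin d → ℝ) =>
      ((2 / h : ℝ) * ((∑ i, p.1 i * v.1 i + ∑ i, p.2 i * v.2 i : ℝ) : ℂ)) * f p) := by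
    have : Function.HasTemperateGrowth (fun p : (Fin d → ℝ) × (Fin d → ℝ) =>
        ∑ i, p.1 i * v.1 i + ∑ i, p.2 i * v.2 i) :=
      (Function.HasTemperateGrowth.sum fun i _ => (temperate_fst i).fun_mul (.const _)).fun_add
        (Function.HasTemperateGrowth.sum fun i _ => (temperate_snd i).fun_mul (.const _))
    exact ((Function.HasTemperateGrowth.const _).fun_mul (temperate_ofReal this)).fun_mul hf
  have h1 := integral_mul_fderiv_eq_neg_fderiv_mul_of_integrable (μ := volume) (f := f)
    (g := fun p => (gd h p : ℂ)) (v := v) (gd_int hh (temperate_fderiv_apply hf v)) ?_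
    (gd_int hh hf) (fun x _ => temperate_diff hf x) (fun x _ => gd_diff h x)
  · rw [← neg_eq_iff_eq_neg] at h1
    rw [← h1, ← integral_neg]
    congr 1; ext p
    rw [gd_fderiv]
    ring
  · convert! (gd_int hh ht).neg using 1
    ext p
    rw [gd_fderiv]
    simp only [Pi.neg_apply]
    ring

lemma rot_ibp {d : ℕ} {h : ℝ} (hh : 0 < h) (j : Fin d) {f : (Fin d → ℝ) × (Fin d → ℝ) → ℂ}
    (hf : f.HasTemperateGrowth) : ∫ p, rotC j f p * (gd h p : ℂ) = 0 := by
  have tx := temperate_ofReal (temperate_fst j)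
  have ty := temperate_ofReal (temperate_snd j)
  have s1 := gd_stein hh (tx.fun_mul hf) (0, Pi.single j 1)
  have s2 := gd_stein hh (ty.fun_mul hf) (Pi.single j 1, 0)
  have e : ∀ p, rotC j f p * (gd h p : ℂ) =
      fderiv ℝ (fun p => (p.1 j : ℂ) * f p) p (0, Pi.single j 1) * (gd h p : ℂ) -
      fderiv ℝ (fun p => (p.2 j : ℂ) * f p) p (Pi.single j 1, 0) * (gd h p : ℂ) := by
    intro p
    rw [fderiv_fun_mul (temperate_diff tx p) (temperate_diff hf p),
      fderiv_fun_mul (temperate_diff ty p) (temperate_diff hf p)]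
    have f1 : fderiv ℝ (fun p : (Fin d → ℝ) × (Fin d → ℝ) => (p.1 j : ℂ)) p (0, Pi.single j 1)
        = 0 := by
      have := (Complex.ofRealCLM.comp
        ((ContinuousLinearMap.proj (R := ℝ) (φ := fun _ : Fin d => ℝ) j).comp
        (ContinuousLinearMap.fst ℝ (Fin d → ℝ) (Fin d → ℝ)))).hasFDerivAt (x := p)
      erw [this.fderiv]; simp
    have f2 : fderiv ℝ (fun p : (Fin d → ℝ) × (Fin d → ℝ) => (p.2 j : ℂ)) p (Pi.single j 1, 0)
        = 0 := by
      have := (Complex.ofRealCLM.comp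
        ((ContinuousLinearMap.proj (R := ℝ) (φ := fun _ : Fin d => ℝ) j).comp
        (ContinuousLinearMap.snd ℝ (Fin d → ℝ) (Fin d → ℝ)))).hasFDerivAt (x := p)
      erw [this.fderiv]; simp
    simp [rotC, f1, f2]
    ring
  simp_rw [e]
  rw [integral_sub (gd_int hh (temperate_fderiv_apply (tx.fun_mul hf) _))
    (gd_int hh (temperate_fderiv_apply (ty.fun_mul hf) _)), s1, s2, sub_eq_zero]
  congr 1; ext p
  simp [Pi.single_apply]
  left
  ring

lemma gauss_integral {d : ℕ} {h : ℝ} (hh : 0 < h) (g : (Fin d → ℝ) × (Fin d → ℝ) → ℂ) :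
    ∫ p, g p ∂ gaussMeasure2d d (h / 2) =
      (((2 * π * (h / 2)) ^ (-(d : ℝ)) : ℝ) : ℂ) * ∫ p, g p * (gd h p : ℂ) := by
  unfold gaussMeasure2d
  rw [integral_withDensity_eq_integral_toReal_smul (by fun_prop)
    (Filter.Eventually.of_forall fun _ => ENNReal.ofReal_lt_top), ← integral_const_mul]
  congr 1; ext p
  rw [ENNReal.toReal_ofReal (by positivity), Complex.real_smul]
  have : -((∑ i, p.1 i ^ 2) + ∑ i, p.2 i ^ 2) / (2 * (h / 2)) =
      -(1 / h) * ((∑ i, p.1 i ^ 2) + ∑ i, p.2 i ^ 2) := by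
    field_simp
  rw [this]
  unfold gd
  push_cast
  ring

lemma step {d : ℕ} {h : ℝ} (hh : 0 < h) (j : Fin d) (α β : Fin d → ℕ) (hj : α j ≠ β j)
    {F : (Fin d → ℝ) × (Fin d → ℝ) → ℝ} (hF : F.HasTemperateGrowth) :
    (∫ p : (Fin d → ℝ) × (Fin d → ℝ), (F p : ℂ) *
          ∏ l, wigner1 h (fun t => (psi h (α l) t : ℂ)) (fun t => (psi h (β l) t : ℂ))
            (p.1 l) (p.2 l) ∂ gaussMeasure2d d (h / 2)) =
        (Complex.I / ((((β j : ℝ) - (α j : ℝ)) : ℝ) : ℂ)) *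
          ∫ p : (Fin d → ℝ) × (Fin d → ℝ), (rotOpD d j F p : ℂ) *
            ∏ l, wigner1 h (fun t => (psi h (α l) t : ℂ)) (fun t => (psi h (β l) t : ℂ))
              (p.1 l) (p.2 l) ∂ gaussMeasure2d d (h / 2) := by
  have hV : IsEig j (fun p => ∏ l, wigner1 h (fun t => (psi h (α l) t : ℂ))
      (fun t => (psi h (β l) t : ℂ)) (p.1 l) (p.2 l)) (Complex.I * (β j - α j)) := by
    have := IsEig.prod (j := j) Finset.univ
      (fun l p => wigner1 h (fun t => (psi h (α l) t : ℂ))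
        (fun t => (psi h (β l) t : ℂ)) (p.1 l) (p.2 l))
      (fun l => if l = j then Complex.I * (β l - α l) else 0) (fun l _ => by
        obtain ⟨c, hc⟩ := wigner1_eq hh (α l) (β l)
        simp only [hc]
        exact (isEig_AA h j l (α l) (β l)).const_mul c)
    simpa using this
  set V : (Fin d → ℝ) × (Fin d → ℝ) → ℂ := fun p => ∏ l, wigner1 h (fun t => (psi h (α l) t : ℂ))
      (fun t => (psi h (β l) t : ℂ)) (p.1 l) (p.2 l) with hVdef
  have hFc := temperate_ofReal hF
  have hRc := temperate_ofReal (rotOpD_temperate j hF)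
  have h0 := rot_ibp hh j (hFc.fun_mul hV.1)
  have e : ∀ p, rotC j (fun p => (F p : ℂ) * V p) p * (gd h p : ℂ) =
      (rotOpD d j F p : ℂ) * V p * gd h p +
        Complex.I * (β j - α j) * ((F p : ℂ) * V p * gd h p) := by
    intro p
    rw [rotC_mul j (temperate_diff hFc p) (temperate_diff hV.1 p),
      rotC_ofReal j (temperate_diff hF), hV.2]
    ring
  simp_rw [e] at h0
  rw [integral_add (gd_int hh (hRc.fun_mul hV.1)) ((gd_int hh (hFc.fun_mul hV.1)).const_mul _),
    integral_const_mul] at h0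
  rw [gauss_integral hh, gauss_integral hh]
  have hne : ((β j : ℂ) - α j) ≠ 0 := by
    rw [sub_ne_zero]; exact_mod_cast hj.symm
  change _ * (∫ p, (F p : ℂ) * V p * gd h p) = _ * (_ * ∫ p, (rotOpD d j F p : ℂ) * V p * gd h p)
  rw [eq_neg_of_add_eq_zero_left h0]
  push_cast
  field_simp
  rw [Complex.I_sq]
  ring

/-- Integration by parts for the oblique matrix elements `I_{α,β}(F̈)` with `α ≠ β`. -/
theorem oblique_terms (h : ℝ) (hh : 0 < h) (d : ℕ) (hd : 1 ≤ d)
    (F : (Fin d → ℝ) × (Fin d → ℝ) → ℝ) (hF : ContDiff ℝ (⊤ : ℕ∞) F)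
    (hFgrowth : ∀ k : ℕ, ∃ (C : ℝ) (m : ℕ), ∀ p : (Fin d → ℝ) × (Fin d → ℝ),
      ‖iteratedFDeriv ℝ k F p‖ ≤ C * (1 + ‖p‖) ^ m)
    (α β : Fin d → ℕ) (hαβ : α ≠ β) :
    (∀ j : Fin d, α j ≠ β j → ∀ n : ℕ, 1 ≤ n →
      (∫ p : (Fin d → ℝ) × (Fin d → ℝ), (F p : ℂ) *
          ∏ l, wigner1 h (fun t => (psi h (α l) t : ℂ)) (fun t => (psi h (β l) t : ℂ))
            (p.1 l) (p.2 l) ∂ gaussMeasure2d d (h / 2)) =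
        (Complex.I ^ n / ((((β j : ℝ) - (α j : ℝ)) : ℝ) : ℂ) ^ n) *
          ∫ p : (Fin d → ℝ) × (Fin d → ℝ), (((rotOpD d j)^[n] F) p : ℂ) *
            ∏ l, wigner1 h (fun t => (psi h (α l) t : ℂ)) (fun t => (psi h (β l) t : ℂ))
              (p.1 l) (p.2 l) ∂ gaussMeasure2d d (h / 2)) ∧
    ((∀ (j : Fin d) (p : (Fin d → ℝ) × (Fin d → ℝ)), rotOpD d j F p = 0) →
      (∫ p : (Fin d → ℝ) × (Fin d → ℝ), (F p : ℂ) *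
          ∏ l, wigner1 h (fun t => (psi h (α l) t : ℂ)) (fun t => (psi h (β l) t : ℂ))
            (p.1 l) (p.2 l) ∂ gaussMeasure2d d (h / 2)) = 0) := by

  have hT : F.HasTemperateGrowth := by
    refine ⟨hF, fun n => ?_⟩
    obtain ⟨C, m, H⟩ := hFgrowth n
    exact ⟨m, C, H⟩
  have main : ∀ j : Fin d, α j ≠ β j → ∀ n : ℕ,
      ((rotOpD d j)^[n] F).HasTemperateGrowth ∧
      (∫ p : (Fin d → ℝ) × (Fin d → ℝ), (F p : ℂ) *
          ∏ l, wigner1 h (fun t => (psi h (α l) t : ℂ)) (fun t => (psi h (β l) t : ℂ))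
            (p.1 l) (p.2 l) ∂ gaussMeasure2d d (h / 2)) =
        (Complex.I ^ n / ((((β j : ℝ) - (α j : ℝ)) : ℝ) : ℂ) ^ n) *
          ∫ p : (Fin d → ℝ) × (Fin d → ℝ), (((rotOpD d j)^[n] F) p : ℂ) *
            ∏ l, wigner1 h (fun t => (psi h (α l) t : ℂ)) (fun t => (psi h (β l) t : ℂ))
              (p.1 l) (p.2 l) ∂ gaussMeasure2d d (h / 2) := by
    intro j hj n
    induction n with
    | zero => exact ⟨hT, by simp⟩
    | succ n ih =>
      obtain ⟨i1, i2⟩ := ih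
      rw [Function.iterate_succ_apply']
      refine ⟨rotOpD_temperate j i1, ?_⟩
      rw [i2, step hh j α β hj i1, ← mul_assoc, pow_succ, pow_succ, mul_div_mul_comm]
  refine ⟨fun j hj n _ => (main j hj n).2, fun hz => ?_⟩
  obtain ⟨j, hj⟩ := Function.ne_iff.1 hαβ
  rw [step hh j α β hj hT]
  simp [hz]
end
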